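/- (Uniqueness part of Theorem 3.1.) Suppose (u₁,…,u_K) and (v₁,…,v_K) are two arrays of functions, where u_k, v_k : [T_{k−1}, T_k] × 𝒮̄ → ℝ are continuous and satisfy 0 ≤ u_k(t,x) ≤ Σ_{i=k}^K w_i G_i and 0 ≤ v_k(t,x) ≤ Σ_{i=k}^K w_i G_i for all (t,x) ∈ [T_{k−1}, T_k] × 𝒮̄, and suppose both arrays are viscosity solutions of the QVI system. Then u_k = v_k on [T_{k−1}, T_k] × 𝒮̄ for every k = 1, …, K. -/

import Mathlib

open Set Filter

/-- The closed positive quadrant of portfolio positions. -/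
def Sbar : Set (ℝ × ℝ) := Set.Ici 0 ×ˢ Set.Ici 0

/-- The positive quadrant without the origin. -/
def Sset : Set (ℝ × ℝ) := Sbar \ {(0, 0)}

/-- A transaction cost function. -/
def IsCostFn (C : ℝ → ℝ) : Prop :=
  Continuous C ∧ (∀ d₁ d₂ : ℝ, |d₁| ≤ |d₂| → C d₁ ≤ C d₂) ∧ 0 < C 0 ∧
    StrictMono (fun d => d + C d) ∧ Set.Ici (0 : ℝ) ⊆ Set.range (fun d => d + C d)

/-- The rebalancing map. -/
def Gam (C : ℝ → ℝ) (x : ℝ × ℝ) (d : ℝ) : ℝ × ℝ := (x.1 - d - C d, x.2 + d)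

/-- The set of feasible transactions. -/
def Dset (C : ℝ → ℝ) (x : ℝ × ℝ) : Set ℝ := {d | Gam C x d ∈ Sbar}

/-- Intervention operator applied to a time-dependent function
`f : ℝ → ℝ × ℝ → ℝ`, with value `+∞` if no transaction is feasible. -/
noncomputable def MopF (C : ℝ → ℝ) (f : ℝ → ℝ × ℝ → ℝ) (p : ℝ × (ℝ × ℝ)) : EReal :=
  ⨅ d ∈ Dset C p.2, ((f p.1 (Gam C p.2 d) : ℝ) : EReal)

/-- Upper semicontinuous envelope of `h` computed on `E`. -/
noncomputable def uscEnv {α : Type*} [TopologicalSpace α]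
    (h : α → EReal) (E : Set α) (z : α) : EReal :=
  Filter.limsup h (nhdsWithin z E)

/-- Lower semicontinuous envelope of `h` computed on `E`. -/
noncomputable def lscEnv {α : Type*} [TopologicalSpace α]
    (h : α → EReal) (E : Set α) (z : α) : EReal :=
  Filter.liminf h (nhdsWithin z E)

/-- The operator `𝓛[φ](t, x₀, x₁)` of the portfolio dynamics, written in terms of
classical partial derivatives of the (curried) test function `φ`. -/
noncomputable def gen (r μ σ : ℝ) (φ : ℝ → ℝ → ℝ → ℝ) (t x₀ x₁ : ℝ) : ℝ :=
  -(deriv (fun s => φ s x₀ x₁) t)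
    - r * x₀ * deriv (fun y => φ t y x₁) x₀
    - μ * x₁ * deriv (fun y => φ t x₀ y) x₁
    - σ ^ 2 / 2 * x₁ ^ 2 * deriv (deriv (fun y => φ t x₀ y)) x₁

/-- The parabolic interior domain `[a, b) × 𝒮` as a subset of `ℝ × ℝ × ℝ`. -/
def domI (a b : ℝ) : Set (ℝ × ℝ × ℝ) :=
  {p | a ≤ p.1 ∧ p.1 < b ∧ (p.2.1, p.2.2) ∈ Sset}

/-- A test function is `C²` on an open neighbourhood of `[a, b) × 𝒮`. -/
def IsTest (a b : ℝ) (φ : ℝ → ℝ → ℝ → ℝ) : Prop :=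
  ∃ U : Set (ℝ × ℝ × ℝ), IsOpen U ∧ domI a b ⊆ U ∧
    ContDiffOn ℝ 2 (fun p : ℝ × ℝ × ℝ => φ p.1 p.2.1 p.2.2) U

/-- An array `v 1, …, v K` (with `v k` understood on `[T (k−1), T k] × 𝒮̄`) is a
viscosity solution of the QVI system: interior sub/supersolution conditions on each
`[T (k−1), T k) × 𝒮`, the coupling conditions at the intermediate deadlines `T k`,
the terminal condition at `T K`, and the boundary condition at the origin.
Envelopes of the intervention operator are computed on `[T (k−1), T k] × 𝒮̄`. -/
def IsQVISol (C : ℝ → ℝ) (r μ σ : ℝ) (K : ℕ) (T : ℕ → ℝ) (w G : ℕ → ℝ)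
    (v : ℕ → ℝ → ℝ × ℝ → ℝ) : Prop :=
  (∀ k, 1 ≤ k → k ≤ K →
    ∀ tb : ℝ, ∀ xb : ℝ × ℝ, tb ∈ Set.Ico (T (k - 1)) (T k) → xb ∈ Sset →
      ∀ φ : ℝ → ℝ → ℝ → ℝ, IsTest (T (k - 1)) (T k) φ →
        ((∀ t ∈ Set.Ico (T (k - 1)) (T k), ∀ x ∈ Sset,
            v k t x - φ t x.1 x.2 ≤ v k tb xb - φ tb xb.1 xb.2) →
          gen r μ σ φ tb xb.1 xb.2 ≤ 0 ∧
          (v k tb xb : EReal)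
            ≤ uscEnv (MopF C (v k)) (Set.Icc (T (k - 1)) (T k) ×ˢ Sbar) (tb, xb)) ∧
        ((∀ t ∈ Set.Ico (T (k - 1)) (T k), ∀ x ∈ Sset,
            v k tb xb - φ tb xb.1 xb.2 ≤ v k t x - φ t x.1 x.2) →
          0 ≤ gen r μ σ φ tb xb.1 xb.2 ∨
          lscEnv (MopF C (v k)) (Set.Icc (T (k - 1)) (T k) ×ˢ Sbar) (tb, xb)
            ≤ (v k tb xb : EReal))) ∧
  (∀ k, 1 ≤ k → k < K → ∀ x ∈ Sset,
    ((v k (T k) x : EReal) ≤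
      min ((sInf {y | ∃ θ : ℝ, 0 ≤ θ ∧ θ ≤ x.1 ∧
            y = w k * max (G k - θ) 0 + v (k + 1) (T k) (x.1 - θ, x.2)} : ℝ) : EReal)
        (uscEnv (MopF C (v k)) (Set.Icc (T (k - 1)) (T k) ×ˢ Sbar) (T k, x))) ∧
    (min ((sInf {y | ∃ θ : ℝ, 0 ≤ θ ∧ θ ≤ x.1 ∧
            y = w k * max (G k - θ) 0 + v (k + 1) (T k) (x.1 - θ, x.2)} : ℝ) : EReal)
        (lscEnv (MopF C (v k)) (Set.Icc (T (k - 1)) (T k) ×ˢ Sbar) (T k, x))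
      ≤ (v k (T k) x : EReal))) ∧
  (∀ x ∈ Sset,
    ((v K (T K) x : EReal) ≤
      min ((w K * max (G K - x.1 - max (x.2 - C (-x.2)) 0) 0 : ℝ) : EReal)
        (uscEnv (MopF C (v K)) (Set.Icc (T (K - 1)) (T K) ×ˢ Sbar) (T K, x))) ∧
    (min ((w K * max (G K - x.1 - max (x.2 - C (-x.2)) 0) 0 : ℝ) : EReal)
        (lscEnv (MopF C (v K)) (Set.Icc (T (K - 1)) (T K) ×ˢ Sbar) (T K, x))
      ≤ (v K (T K) x : EReal))) ∧
  (∀ k, 1 ≤ k → k ≤ K → ∀ t ∈ Set.Icc (T (k - 1)) (T k),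
    v k t (0, 0) = ∑ i ∈ Finset.Icc k K, w i * G i)

open Topology

/-- uncurried generator -/
noncomputable def genp (r μ σ : ℝ) (φ : ℝ × ℝ × ℝ → ℝ) (p : ℝ × ℝ × ℝ) : ℝ :=
  gen r μ σ (fun t x y => φ (t, x, y)) p.1 p.2.1 p.2.2

/-- explicit derivative data for the generator -/
def HG (r μ σ : ℝ) (φ : ℝ × ℝ × ℝ → ℝ) (p : ℝ × ℝ × ℝ) (g : ℝ) : Prop :=
  ∃ (a b : ℝ) (c : ℝ → ℝ) (d : ℝ),
    HasDerivAt (fun s => φ (s, p.2.1, p.2.2)) a p.1 ∧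
    HasDerivAt (fun y => φ (p.1, y, p.2.2)) b p.2.1 ∧
    (∀ᶠ y in 𝓝 p.2.2, HasDerivAt (fun y => φ (p.1, p.2.1, y)) (c y) y) ∧
    HasDerivAt c d p.2.2 ∧
    g = -a - r * p.2.1 * b - μ * p.2.2 * c p.2.2 - σ ^ 2 / 2 * p.2.2 ^ 2 * d

lemma HG.genp_eq {r μ σ : ℝ} {φ : ℝ × ℝ × ℝ → ℝ} {p : ℝ × ℝ × ℝ} {g : ℝ}
    (h : HG r μ σ φ p g) : genp r μ σ φ p = g := by
  obtain ⟨a, b, c, d, ha, hb, hc, hd, rfl⟩ := h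
  unfold genp gen
  have e : deriv (fun y => φ (p.1, p.2.1, y)) =ᶠ[𝓝 p.2.2] c := by
    filter_upwards [hc] with y hy using hy.deriv
  simp only
  rw [ha.deriv, hb.deriv, e.deriv_eq, hd.deriv, e.eq_of_nhds]

lemma HG.add {r μ σ : ℝ} {φ ψ : ℝ × ℝ × ℝ → ℝ} {p : ℝ × ℝ × ℝ} {g g' : ℝ}
    (h : HG r μ σ φ p g) (h' : HG r μ σ ψ p g') :
    HG r μ σ (fun q => φ q + ψ q) p (g + g') := by
  obtain ⟨a, b, c, d, ha, hb, hc, hd, rfl⟩ := h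
  obtain ⟨a', b', c', d', ha', hb', hc', hd', rfl⟩ := h'
  refine ⟨a + a', b + b', fun y => c y + c' y, d + d', ha.add ha', hb.add hb', ?_, hd.add hd', by ring⟩
  filter_upwards [hc, hc'] with y h1 h2 using h1.add h2

lemma HG.const_mul {r μ σ : ℝ} {φ : ℝ × ℝ × ℝ → ℝ} {p : ℝ × ℝ × ℝ} {g : ℝ}
    (k : ℝ) (h : HG r μ σ φ p g) :
    HG r μ σ (fun q => k * φ q) p (k * g) := by
  obtain ⟨a, b, c, d, ha, hb, hc, hd, rfl⟩ := h
  refine ⟨k * a, k * b, fun y => k * c y, k * d, ha.const_mul k, hb.const_mul k, ?_,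
    hd.const_mul k, by ring⟩
  filter_upwards [hc] with y h1 using h1.const_mul k

lemma HG.const {r μ σ : ℝ} {p : ℝ × ℝ × ℝ} (k : ℝ) :
    HG r μ σ (fun _ => k) p 0 := by
  refine ⟨0, 0, fun _ => 0, 0, hasDerivAt_const _ _, hasDerivAt_const _ _,
    Eventually.of_forall fun y => hasDerivAt_const _ _, hasDerivAt_const _ _, by ring⟩

/-- functions of time only -/
lemma HG.time {r μ σ : ℝ} {p : ℝ × ℝ × ℝ} {f : ℝ → ℝ} {f' : ℝ} (h : HasDerivAt f f' p.1) :
    HG r μ σ (fun q => f q.1) p (-f') := by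
  refine ⟨f', 0, fun _ => 0, 0, h, hasDerivAt_const _ (f p.1),
    Eventually.of_forall fun y => hasDerivAt_const y (f p.1), hasDerivAt_const _ _, by ring⟩

lemma HG.sub_const_mul {r μ σ : ℝ} {φ ψ : ℝ × ℝ × ℝ → ℝ} {p : ℝ × ℝ × ℝ} {g g' : ℝ}
    (h : HG r μ σ φ p g) (k : ℝ) (h' : HG r μ σ ψ p g') :
    HG r μ σ (fun q => φ q - k * ψ q) p (g - k * g') := by
  have := h.add (h'.const_mul (-k))
  convert this using 1
  · ext q; ring
  · ring

lemma genp_congr {r μ σ : ℝ} {φ ψ : ℝ × ℝ × ℝ → ℝ} {p : ℝ × ℝ × ℝ}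
    (h : φ =ᶠ[𝓝 p] ψ) : genp r μ σ φ p = genp r μ σ ψ p := by
  obtain ⟨t, x, y⟩ := p
  unfold genp gen
  have h1 : (fun s => φ (s, x, y)) =ᶠ[𝓝 t] (fun s => ψ (s, x, y)) := by
    have : ContinuousAt (fun s : ℝ => (s, x, y)) t := by fun_prop
    exact this.eventually h
  have h2 : (fun s => φ (t, s, y)) =ᶠ[𝓝 x] (fun s => ψ (t, s, y)) := by
    have : ContinuousAt (fun s : ℝ => (t, s, y)) x := by fun_prop
    exact this.eventually h
  have h3 : (fun s => φ (t, x, s)) =ᶠ[𝓝 y] (fun s => ψ (t, x, s)) := by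
    have : ContinuousAt (fun s : ℝ => (t, x, s)) y := by fun_prop
    exact this.eventually h
  simp only
  rw [h1.deriv_eq, h2.deriv_eq, h3.deriv_eq, h3.deriv.deriv_eq]

lemma genp_neg {r μ σ : ℝ} {φ : ℝ × ℝ × ℝ → ℝ} {p : ℝ × ℝ × ℝ} :
    genp r μ σ (fun q => - φ q) p = - genp r μ σ φ p := by
  unfold genp gen
  simp only [deriv.fun_neg']
  ring

lemma localize {D : Set (ℝ × ℝ × ℝ)} {f φ : ℝ × ℝ × ℝ → ℝ} {p : ℝ × ℝ × ℝ} {W : ℝ}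
    (hW : ∀ q ∈ D, -W ≤ f q) (hφ : ContDiffAt ℝ 2 φ p)
    (hmin : ∀ᶠ q in 𝓝[D] p, f p - φ p ≤ f q - φ q) :
    ∃ ψ : ℝ × ℝ × ℝ → ℝ, ContDiff ℝ 2 ψ ∧ ψ =ᶠ[𝓝 p] φ ∧
      ∀ q ∈ D, f p - ψ p ≤ f q - ψ q := by
  have h1 : ∀ᶠ q in 𝓝 p, ContDiffAt ℝ 2 φ q := hφ.eventually (by simp)
  have h2 : ∀ᶠ q in 𝓝 p, q ∈ D → f p - φ p ≤ f q - φ q := eventually_nhdsWithin_iff.1 hmin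
  obtain ⟨ε, hε, hb⟩ := Metric.eventually_nhds_iff_ball.1 (h1.and h2)
  let χ : ContDiffBump p := ⟨ε / 3, ε / 2, by positivity, by linarith⟩
  set B : ℝ := W + |f p - φ p| with hB
  have hχ1 : ∀ᶠ q in 𝓝 p, χ q = 1 := by
    have := χ.eventuallyEq_one
    filter_upwards [this] with q hq using by simpa using hq
  refine ⟨fun q => χ q * (φ q + B) - B, ?_, ?_, ?_⟩
  · rw [contDiff_iff_contDiffAt]
    intro q
    by_cases hq : q ∈ Metric.ball p ε
    · exact ((χ.contDiff.contDiffAt).mul ((hb q hq).1.add contDiffAt_const)).sub contDiffAt_const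
    · have hq' : q ∉ tsupport χ := by
        rw [χ.tsupport_eq]
        intro hc
        apply hq
        have : dist q p ≤ ε / 2 := hc
        simp only [Metric.mem_ball]; linarith
      have : ∀ᶠ x in 𝓝 q, χ x = 0 := by
        have := notMem_tsupport_iff_eventuallyEq.1 hq'
        filter_upwards [this] with x hx using by simpa using hx
      have e : (fun q => χ q * (φ q + B) - B) =ᶠ[𝓝 q] fun _ => -B := by
        filter_upwards [this] with x hx
        rw [hx]; ring
      exact contDiffAt_const.congr_of_eventuallyEq e
  · filter_upwards [hχ1] with q hq
    rw [hq]; ring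
  · intro q hq
    have e1 : χ p = 1 := hχ1.self_of_nhds
    have n0 : 0 ≤ χ q := χ.nonneg
    have n1 : χ q ≤ 1 := χ.le_one
    have hw := hW q hq
    have ab := le_abs_self (f p - φ p)
    simp only [e1]
    by_cases hqb : q ∈ Metric.ball p ε
    · have := (hb q hqb).2 hq
      nlinarith
    · have : χ q = 0 := by
        apply χ.zero_of_le_dist
        simp only [Metric.mem_ball, not_lt] at hqb
        change ε / 2 ≤ dist q p
        linarith
      rw [this]; linarith

/-- Local supersolution property of the linear equation. -/
def LSuper (r μ σ : ℝ) (D O : Set (ℝ × ℝ × ℝ)) (f : ℝ × ℝ × ℝ → ℝ) : Prop :=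
  ∀ p ∈ D, p ∈ O → ∀ φ : ℝ × ℝ × ℝ → ℝ, ContDiffAt ℝ 2 φ p →
    (∀ᶠ q in 𝓝[D] p, f p - φ p ≤ f q - φ q) → 0 ≤ genp r μ σ φ p

lemma pen {A : Set (ℝ × ℝ × ℝ)} (hA : IsCompact A) {ψ q : ℝ × ℝ × ℝ → ℝ}
    (hψ : ContinuousOn ψ A) (hq : ContinuousOn q A) (hq0 : ∀ p ∈ A, 0 ≤ q p)
    (hpos : ∀ p ∈ A, q p = 0 → 0 < ψ p) : ∃ n : ℝ, ∀ p ∈ A, 0 < ψ p + n * q p := by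
  by_cases hne : (A ∩ ψ ⁻¹' Set.Iic 0).Nonempty
  · have hc : IsCompact (A ∩ ψ ⁻¹' Set.Iic 0) :=
      hA.of_isClosed_subset (hψ.preimage_isClosed_of_isClosed hA.isClosed isClosed_Iic)
        Set.inter_subset_left
    obtain ⟨p0, hp0, hm⟩ := hc.exists_isMinOn hne (hq.mono Set.inter_subset_left)
    obtain ⟨p1, hp1, hm1⟩ := hc.exists_isMinOn hne (hψ.mono Set.inter_subset_left)
    have hq1 : 0 < q p0 := by
      rcases (hq0 p0 hp0.1).lt_or_eq with h | h
      · exact h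
      · have := hpos p0 hp0.1 h.symm
        have h2 : ψ p0 ≤ 0 := hp0.2
        linarith
    have hψ1 : ψ p1 ≤ 0 := hp1.2
    refine ⟨(1 - ψ p1) / q p0, fun p hp => ?_⟩
    by_cases h : ψ p ≤ 0
    · have h1 : q p0 ≤ q p := hm ⟨hp, h⟩
      have h2 : ψ p1 ≤ ψ p := hm1 ⟨hp, h⟩
      have h3 : (1 - ψ p1) / q p0 * q p0 ≤ (1 - ψ p1) / q p0 * q p :=
        mul_le_mul_of_nonneg_left h1 (by apply div_nonneg <;> linarith)
      rw [div_mul_cancel₀ _ hq1.ne'] at h3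
      linarith
    · push Not at h
      have : 0 ≤ (1 - ψ p1) / q p0 * q p :=
        mul_nonneg (by apply div_nonneg <;> linarith) (hq0 p hp)
      linarith
  · refine ⟨0, fun p hp => ?_⟩
    by_contra h
    exact hne ⟨p, hp, by simpa using h⟩

/-- Comparison of a supersolution with a smooth subsolution on the zero set of `q`. -/
lemma MP {r μ σ : ℝ} {D O K : Set (ℝ × ℝ × ℝ)} {f Φ q : ℝ × ℝ × ℝ → ℝ} {t₀ : ℝ}
    (hf : LSuper r μ σ D O f) (hO : IsOpen O) (hK : IsCompact K)
    (hOK : ∀ p ∈ O, p ∈ D → p ∈ K) (hKD : K ⊆ D)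
    (hfc : ContinuousOn f K) (hΦc : ContinuousOn Φ K) (hqc : ContinuousOn q K)
    (hΦs : ∀ p ∈ O, p ∈ D → ContDiffAt ℝ 2 Φ p) (hqs : ∀ p ∈ O, p ∈ D → ContDiffAt ℝ 2 q p)
    (hΦg : ∀ p ∈ O, p ∈ D → ∃ g ≤ 0, HG r μ σ Φ p g)
    (hqg : ∀ p ∈ O, p ∈ D → HG r μ σ q p 0)
    (hq0 : ∀ p ∈ K, 0 ≤ q p) 
    (hbd : ∀ p ∈ K, p ∉ O → q p = 0 → p.1 ≠ t₀ → Φ p ≤ f p) :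
    ∀ p ∈ K, q p = 0 → t₀ < p.1 → Φ p ≤ f p := by
  intro ps hps hqps htps
  by_contra hcon
  push Not at hcon
  obtain ⟨pm, hpm, hmin⟩ := hK.exists_isMinOn ⟨ps, hps⟩ (hfc.sub hΦc)
  set B : ℝ := |f pm - Φ pm| + 1 with hB
  have hBpos : 0 < B := by positivity
  have hlow : ∀ p ∈ K, -B < f p - Φ p := by
    intro p hp
    have h1 : f pm - Φ pm ≤ f p - Φ p := hmin hp
    have := neg_abs_le (f pm - Φ pm)
    linarith
  set θ : ℝ := Φ ps - f ps with hθ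
  have hθpos : 0 < θ := by linarith
  -- choose N
  obtain ⟨N, hN0, hN⟩ : ∃ N : ℝ, 0 < N ∧ B * Real.exp (-N * (ps.1 - t₀)) < θ := by
    have h1 : Tendsto (fun N : ℝ => B * Real.exp (-N * (ps.1 - t₀))) atTop (𝓝 (B * 0)) := by
      apply Tendsto.const_mul
      apply Real.tendsto_exp_atBot.comp
      have : Tendsto (fun N : ℝ => N * (ps.1 - t₀)) atTop atTop :=
        tendsto_id.atTop_mul_const (by linarith)
      have := tendsto_neg_atTop_atBot.comp this
      refine this.congr fun N => ?_
      simp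
    have h2 := h1.eventually (gt_mem_nhds (show B * 0 < θ by simpa using hθpos))
    obtain ⟨N, h3, h4⟩ := (h2.and (eventually_gt_atTop 0)).exists
    exact ⟨N, h4, h3⟩
  set E : ℝ × ℝ × ℝ → ℝ := fun p => B * Real.exp (-N * (p.1 - t₀)) with hE
  have hEc : Continuous E := by fun_prop
  have hEpos : ∀ p, 0 < E p := fun p => by positivity
  have hEg : ∀ p, HG r μ σ E p (N * E p) := by
    intro p
    have hd : HasDerivAt (fun t => B * Real.exp (-N * (t - t₀)))
        (B * (Real.exp (-N * (p.1 - t₀)) * (-N * 1))) p.1 :=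
      ((((hasDerivAt_id p.1).sub_const t₀).const_mul (-N)).exp).const_mul B
    convert HG.time (r := r) (μ := μ) (σ := σ) hd using 1
    simp only [hE]; ring
  set ψ : ℝ × ℝ × ℝ → ℝ := fun p => f p - Φ p + E p with hψ
  have hψc : ContinuousOn ψ K := (hfc.sub hΦc).add hEc.continuousOn
  have hA : IsCompact (K \ O) := hK.diff hO
  obtain ⟨n, hn⟩ := pen hA (hψc.mono Set.sdiff_subset) (hqc.mono Set.sdiff_subset)
    (fun p hp => hq0 p hp.1) (by
      intro p hp hqp
      by_cases h : p.1 = t₀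
      · have h1 := hlow p hp.1
        have h2 : E p = B := by simp [hE, h]
        simp only [hψ]; linarith
      · have h1 := hbd p hp.1 hp.2 hqp h
        have h2 := hEpos p
        simp only [hψ]; linarith)
  obtain ⟨p, hpK, hpmin⟩ := hK.exists_isMinOn ⟨ps, hps⟩ (hψc.add (hqc.const_smul n))
  have hle : ψ p + n * q p ≤ ψ ps + n * q ps := hpmin hps
  have hneg : ψ p + n * q p < 0 := by
    rw [hqps] at hle
    have : ψ ps < 0 := by simp only [hψ, hE]; linarith
    linarith
  have hpO : p ∈ O := by
    by_contra h
    have := hn p ⟨hpK, h⟩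
    linarith
  have hpD := hKD hpK
  obtain ⟨g, hg0, hg⟩ := hΦg p hpO hpD
  have hgen := (hg.sub_const_mul 1 (hEg p)).sub_const_mul n (hqg p hpO hpD)
  have := hf p hpD hpO (fun q' => Φ q' - 1 * E q' - n * q q') (by
      have hEs : ContDiffAt ℝ 2 E p := by
        apply ContDiff.contDiffAt
        simp only [hE]; fun_prop
      exact ((hΦs p hpO hpD).sub (contDiffAt_const.mul hEs)).sub
        (contDiffAt_const.mul (hqs p hpO hpD))) (by
      have : ∀ᶠ q' in 𝓝[D] p, q' ∈ O ∧ q' ∈ D :=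
        (eventually_nhdsWithin_of_eventually_nhds (hO.mem_nhds hpO)).and self_mem_nhdsWithin
      filter_upwards [this] with q' hq'
      have h1 : ψ p + n * q p ≤ ψ q' + n * q q' := hpmin (hOK q' hq'.1 hq'.2)
      simp only [hψ] at h1
      linarith)
  rw [hgen.genp_eq] at this
  have := mul_pos hN0 (hEpos p)
  linarith

/-- `H` is smooth with `H_t + κ H_zz = e`. -/
def Cal (κ : ℝ) (H : ℝ × ℝ → ℝ) (e : ℝ → ℝ → ℝ) : Prop :=
  ContDiff ℝ 2 H ∧ ∃ Ht Hz Hzz : ℝ → ℝ → ℝ,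
    (∀ t z, HasDerivAt (fun s => H (s, z)) (Ht t z) t) ∧
    (∀ t z, HasDerivAt (fun y => H (t, y)) (Hz t z) z) ∧
    (∀ t z, HasDerivAt (fun y => Hz t y) (Hzz t z) z) ∧
    ∀ t z, Ht t z + κ * Hzz t z = e t z

lemma Cal.congr {κ : ℝ} {H : ℝ × ℝ → ℝ} {e e' : ℝ → ℝ → ℝ} (h : Cal κ H e)
    (he : ∀ t z, e t z = e' t z) : Cal κ H e' := by
  have : e = e' := by ext t z; exact he t z
  exact this ▸ h

lemma Cal.add {κ : ℝ} {H H' : ℝ × ℝ → ℝ} {e e' : ℝ → ℝ → ℝ} (h : Cal κ H e) (h' : Cal κ H' e') :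
    Cal κ (fun p => H p + H' p) (fun t z => e t z + e' t z) := by
  obtain ⟨hs, a, b, c, ha, hb, hc, he⟩ := h
  obtain ⟨hs', a', b', c', ha', hb', hc', he'⟩ := h'
  refine ⟨hs.add hs', fun t z => a t z + a' t z, fun t z => b t z + b' t z,
    fun t z => c t z + c' t z, fun t z => (ha t z).add (ha' t z), fun t z => (hb t z).add (hb' t z),
    fun t z => (hc t z).add (hc' t z), fun t z => ?_⟩
  have h1 := he t z
  have h2 := he' t z
  linear_combination h1 + h2

lemma Cal.const_mul {κ : ℝ} {H : ℝ × ℝ → ℝ} {e : ℝ → ℝ → ℝ} (k : ℝ) (h : Cal κ H e) :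
    Cal κ (fun p => k * H p) (fun t z => k * e t z) := by
  obtain ⟨hs, a, b, c, ha, hb, hc, he⟩ := h
  refine ⟨contDiff_const.mul hs, fun t z => k * a t z, fun t z => k * b t z,
    fun t z => k * c t z, fun t z => (ha t z).const_mul k, fun t z => (hb t z).const_mul k,
    fun t z => (hc t z).const_mul k, fun t z => ?_⟩
  have h1 := he t z
  linear_combination k * h1

/-- separated functions -/
lemma Cal.sep {κ : ℝ} {a a' b b' b'' : ℝ → ℝ} (has : ContDiff ℝ 2 a) (hbs : ContDiff ℝ 2 b)
    (ha : ∀ t, HasDerivAt a (a' t) t) (hb : ∀ t, HasDerivAt b (b' t) t)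
    (hb' : ∀ t, HasDerivAt b' (b'' t) t) :
    Cal κ (fun p => a p.1 * b p.2) (fun t z => a' t * b z + κ * (a t * b'' z)) := by
  refine ⟨(has.comp contDiff_fst).mul (hbs.comp contDiff_snd), fun t z => a' t * b z,
    fun t z => a t * b' z, fun t z => a t * b'' z, fun t z => (ha t).mul_const (b z),
    fun t z => (hb z).const_mul (a t), fun t z => (hb' z).const_mul (a t), fun t z => rfl⟩

open Polynomial in
lemma Cal.polysep {κ : ℝ} (a b : ℝ[X]) :
    Cal κ (fun p => a.eval p.1 * b.eval p.2)
      (fun t z => (derivative a).eval t * b.eval z +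
        κ * (a.eval t * (derivative (derivative b)).eval z)) :=
  Cal.sep (by simpa using a.contDiff_aeval (𝕜 := ℝ) 2) (by simpa using b.contDiff_aeval (𝕜 := ℝ) 2)
    (fun t => a.hasDerivAt t) (fun t => b.hasDerivAt t) (fun t => (derivative b).hasDerivAt t)

open Polynomial in
lemma poly_anti2 (b : ℝ[X]) :
    ∃ g : ℝ[X], derivative (derivative g) = b ∧ g.eval 0 = 0 ∧ g.eval 1 = 0 := by
  induction b using Polynomial.induction_on' with
  | add p q hp hq =>
    obtain ⟨g, h1, h2, h3⟩ := hp
    obtain ⟨g', h1', h2', h3'⟩ := hq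
    exact ⟨g + g', by simp [h1, h1'], by simp [h2, h2'], by simp [h3, h3']⟩
  | monomial n c =>
    refine ⟨monomial (n + 2) (c / ((n + 1) * (n + 2))) - monomial 1 (c / ((n + 1) * (n + 2))),
      ?_, ?_, ?_⟩
    · have : (n + 1 : ℝ) ≠ 0 := by positivity
      have h2 : (n + 2 : ℝ) ≠ 0 := by positivity
      simp only [derivative_sub, derivative_monomial]
      simp only [show n + 2 - 1 - 1 = n by omega]
      simp
      congr 1
      field_simp
      try ring
    · simp
    · simp

open Polynomial in
lemma cal_rhs {κ : ℝ} (hκ : 0 < κ) (n : ℕ) : ∀ a b : ℝ[X], a.natDegree < n →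
    ∃ H, Cal κ H (fun t z => a.eval t * b.eval z) ∧ (∀ t, H (t, 0) = 0) ∧ (∀ t, H (t, 1) = 0) := by
  induction n with
  | zero => intro a b h; omega
  | succ n ih =>
    intro a b hab
    obtain ⟨g, hg, hg0, hg1⟩ := poly_anti2 (C κ⁻¹ * b)
    have hκ' := hκ.ne'
    have hmain := Cal.polysep (κ := κ) a g
    by_cases h0 : a.natDegree = 0
    · refine ⟨_, hmain.congr ?_, fun t => ?_, fun t => ?_⟩
      · intro t z
        rw [hg, derivative_of_natDegree_zero h0]
        simp; field_simp
      · simp [hg0]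
      · simp [hg1]
    · obtain ⟨H', hH', hH0, hH1⟩ := ih (derivative a) g (by
        have := natDegree_derivative_lt h0
        omega)
      refine ⟨_, (hmain.add (hH'.const_mul (-1))).congr ?_, fun t => ?_, fun t => ?_⟩
      · intro t z
        rw [hg]
        simp; field_simp; try ring
      · simp [hg0, hH0]
      · simp [hg1, hH1]

open Polynomial in
lemma cal_side {κ : ℝ} (hκ : 0 < κ) (p q : ℝ[X]) :
    ∃ H, Cal κ H (fun _ _ => 0) ∧ (∀ t, H (t, 0) = p.eval t) ∧ (∀ t, H (t, 1) = q.eval t) := by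
  obtain ⟨H1, h1, h10, h11⟩ := cal_rhs hκ _ (derivative p) (1 - X) (Nat.lt_succ_self _)
  obtain ⟨H2, h2, h20, h21⟩ := cal_rhs hκ _ (derivative q) X (Nat.lt_succ_self _)
  have := ((Cal.polysep (κ := κ) p (1 - X)).add (Cal.polysep (κ := κ) q X)).add
    ((h1.add h2).const_mul (-1))
  refine ⟨_, this.congr ?_, fun t => ?_, fun t => ?_⟩
  · intro t z
    simp
  · simp [h10, h20]
  · simp [h11, h21]

/-- initial data for which the homogeneous Dirichlet problem is explicitly solvable -/
def GoodI (κ t₁ : ℝ) (f : ℝ → ℝ) : Prop :=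
  ∃ H, Cal κ H (fun _ _ => 0) ∧ (∀ t, H (t, 0) = 0) ∧ (∀ t, H (t, 1) = 0) ∧ ∀ z, H (t₁, z) = f z

lemma GoodI.add {κ t₁ : ℝ} {f g : ℝ → ℝ} (hf : GoodI κ t₁ f) (hg : GoodI κ t₁ g) :
    GoodI κ t₁ (fun z => f z + g z) := by
  obtain ⟨H, h1, h2, h3, h4⟩ := hf
  obtain ⟨H', h1', h2', h3', h4'⟩ := hg
  refine ⟨_, by simpa using h1.add h1', ?_, ?_, ?_⟩ <;> intro t <;> simp [*]

lemma GoodI.const_mul {κ t₁ : ℝ} {f : ℝ → ℝ} (k : ℝ) (hf : GoodI κ t₁ f) :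
    GoodI κ t₁ (fun z => k * f z) := by
  obtain ⟨H, h1, h2, h3, h4⟩ := hf
  refine ⟨_, by simpa using h1.const_mul k, ?_, ?_, ?_⟩ <;> intro t <;> simp [*]

lemma GoodI.sin {κ t₁ : ℝ} (j : ℤ) : GoodI κ t₁ (fun z => Real.sin (j * (Real.pi * z))) := by
  set lam : ℝ := κ * (j * Real.pi) ^ 2 with hlam
  have hc := Cal.sep (κ := κ) (a := fun t => Real.exp (lam * (t - t₁)))
    (a' := fun t => Real.exp (lam * (t - t₁)) * (lam * 1))
    (b := fun z => Real.sin (j * (Real.pi * z)))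
    (b' := fun z => Real.cos (j * (Real.pi * z)) * (j * (Real.pi * 1)))
    (b'' := fun z => (-Real.sin (j * (Real.pi * z)) * (j * (Real.pi * 1))) * (j * (Real.pi * 1)))
    (by fun_prop) (by fun_prop)
    (fun t => (((hasDerivAt_id t).sub_const t₁).const_mul lam).exp)
    (fun z => (((hasDerivAt_id z).const_mul Real.pi).const_mul (j : ℝ)).sin)
    (fun z => ((((hasDerivAt_id z).const_mul Real.pi).const_mul (j : ℝ)).cos).mul_const _)
  refine ⟨_, hc.congr ?_, ?_, ?_, ?_⟩
  · intro t z
    rw [hlam]; ring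
  · intro t; simp
  · intro t
    simp [Real.sin_int_mul_pi]
  · intro z; simp

lemma GoodI.sin_cos_pow {κ t₁ : ℝ} (n : ℕ) : ∀ j : ℤ, GoodI κ t₁
    (fun z => Real.sin (j * (Real.pi * z)) * Real.cos (Real.pi * z) ^ n) := by
  induction n with
  | zero => intro j; simpa using GoodI.sin j
  | succ n ih =>
    intro j
    have := ((ih (j + 1)).add (ih (j - 1))).const_mul (1 / 2)
    convert this using 2 with z
    push_cast
    rw [add_mul, sub_mul, one_mul, Real.sin_add, Real.sin_sub]
    ring

open Polynomial in
lemma GoodI.sin_poly {κ t₁ : ℝ} (P : ℝ[X]) : GoodI κ t₁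
    (fun z => Real.sin (Real.pi * z) * P.eval (Real.cos (Real.pi * z))) := by
  induction P using Polynomial.induction_on' with
  | add p q hp hq =>
    convert hp.add hq using 2 with z
    simp; ring
  | monomial n c =>
    convert (GoodI.sin_cos_pow (κ := κ) (t₁ := t₁) n 1).const_mul c using 2 with z
    simp; ring

open Polynomial in
lemma weier (f : ℝ → ℝ) (a b : ℝ) (hf : ContinuousOn f (Set.Icc a b)) {η : ℝ} (hη : 0 < η) :
    ∃ p : ℝ[X], ∀ x ∈ Set.Icc a b, |p.eval x - f x| < η :=
  exists_polynomial_near_of_continuousOn a b f hf η hη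

lemma sine_approx {κ t₁ : ℝ} (f : ℝ → ℝ) (hf : Continuous f) (h0 : f 0 = 0) (h1 : f 1 = 0)
    {η : ℝ} (hη : 0 < η) :
    ∃ F, GoodI κ t₁ F ∧ ∀ z ∈ Set.Icc (0 : ℝ) 1, |F z - f z| ≤ 2 * η := by
  -- soft threshold
  set s : ℝ → ℝ := fun z => max (f z - η) 0 + min (f z + η) 0 with hs
  have hsc : Continuous s := by fun_prop
  have hsf : ∀ z, |s z - f z| ≤ η := by
    intro z
    simp only [hs]
    rw [abs_le]
    constructor <;> rcases le_total (f z - η) 0 with h | h <;> rcases le_total (f z + η) 0 with h' | h' <;>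
      simp only [max_eq_left h, max_eq_right h, min_eq_left h', min_eq_right h'] <;> linarith
  have hsz : ∀ z0, f z0 = 0 → ∀ᶠ z in 𝓝 z0, s z = 0 := by
    intro z0 hz0
    have h2 : ∀ᶠ z in 𝓝 z0, |f z| < η := by
      have : Tendsto (fun z => |f z|) (𝓝 z0) (𝓝 |f z0|) := (hf.abs).continuousAt
      rw [hz0, abs_zero] at this
      exact this.eventually (gt_mem_nhds hη)
    filter_upwards [h2] with z hz
    rw [abs_lt] at hz
    simp only [hs]
    rw [max_eq_right (by linarith), min_eq_right (by linarith)]; simp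
  set k : ℝ → ℝ := fun z => s z / Real.sin (Real.pi * z) with hk
  have hkc : ContinuousOn k (Set.Icc 0 1) := by
    intro z hz
    by_cases hz0 : f z = 0
    · have : k =ᶠ[𝓝 z] fun _ => 0 := by
        filter_upwards [hsz z hz0] with y hy
        simp [hk, hy]
      exact (continuousAt_const.congr this.symm).continuousWithinAt
    · have hne : z ≠ 0 := fun h => hz0 (h ▸ h0)
      have hne1 : z ≠ 1 := fun h => hz0 (h ▸ h1)
      have : 0 < Real.sin (Real.pi * z) := by
        apply Real.sin_pos_of_pos_of_lt_pi
        · have := lt_of_le_of_ne hz.1 hne.symm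
          positivity
        · have := lt_of_le_of_ne hz.2 hne1
          nlinarith [Real.pi_pos]
      apply ContinuousAt.continuousWithinAt
      exact ContinuousAt.div (g := fun z => Real.sin (Real.pi * z)) hsc.continuousAt
        (by fun_prop) this.ne'
  have hKc : ContinuousOn (fun c => k (Real.arccos c / Real.pi)) (Set.Icc (-1) 1) := by
    apply hkc.comp (t := Set.Icc 0 1)
    · exact (Real.continuous_arccos.div_const _).continuousOn
    · intro c _
      constructor
      · exact div_nonneg (Real.arccos_nonneg c) Real.pi_pos.le
      · rw [div_le_one Real.pi_pos]; exact Real.arccos_le_pi c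
  obtain ⟨P, hP⟩ := weier _ _ _ hKc hη
  refine ⟨_, GoodI.sin_poly P, fun z hz => ?_⟩
  have hc := hP (Real.cos (Real.pi * z)) ⟨Real.neg_one_le_cos _, Real.cos_le_one _⟩
  have hp : Real.arccos (Real.cos (Real.pi * z)) / Real.pi = z := by
    rw [Real.arccos_cos (mul_nonneg Real.pi_pos.le hz.1) (by nlinarith [Real.pi_pos, hz.2])]
    field_simp
  rw [hp] at hc
  have hsk : s z = Real.sin (Real.pi * z) * k z := by
    by_cases hsn : Real.sin (Real.pi * z) = 0
    · have : z = 0 ∨ z = 1 := by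
        by_contra hcon
        push Not at hcon
        have : 0 < Real.sin (Real.pi * z) := by
          apply Real.sin_pos_of_pos_of_lt_pi
          · have := lt_of_le_of_ne hz.1 hcon.1.symm
            positivity
          · have := lt_of_le_of_ne hz.2 hcon.2
            nlinarith [Real.pi_pos]
        linarith
      rw [hsn, zero_mul]
      rcases this with rfl | rfl
      · exact (hsz _ h0).self_of_nhds
      · exact (hsz _ h1).self_of_nhds
    · simp only [hk]; field_simp
  have e1 : |Real.sin (Real.pi * z) * P.eval (Real.cos (Real.pi * z)) - s z| ≤ η := by
    rw [hsk, ← mul_sub, abs_mul]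
    calc _ ≤ 1 * η := mul_le_mul (Real.abs_sin_le_one _) hc.le (abs_nonneg _) zero_le_one
      _ = η := one_mul _
  have e2 := hsf z
  rw [abs_le] at *
  constructor <;> linarith [e1.1, e1.2, e2.1, e2.2]

/-- approximate solvability of the Dirichlet problem -/
lemma dirichlet {κ t₀ t₁ : ℝ} (hκ : 0 < κ) (ht : t₀ ≤ t₁) (g : ℝ × ℝ → ℝ)
    (hg : ContinuousOn g (Set.Icc t₀ t₁ ×ˢ Set.Icc 0 1)) {η : ℝ} (hη : 0 < η) :
    ∃ H, Cal κ H (fun _ _ => 0) ∧ (∀ t ∈ Set.Icc t₀ t₁, |H (t, 0) - g (t, 0)| ≤ η) ∧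
      (∀ t ∈ Set.Icc t₀ t₁, |H (t, 1) - g (t, 1)| ≤ η) ∧
      (∀ z ∈ Set.Icc (0 : ℝ) 1, |H (t₁, z) - g (t₁, z)| ≤ η) := by
  have hη4 : 0 < η / 4 := by positivity
  obtain ⟨p, hp⟩ := weier (fun t => g (t, 0)) t₀ t₁
    (hg.comp (by fun_prop) (fun t ht => ⟨ht, by simp⟩)) hη4
  obtain ⟨q, hq⟩ := weier (fun t => g (t, 1)) t₀ t₁
    (hg.comp (by fun_prop) (fun t ht => ⟨ht, by simp⟩)) hη4
  obtain ⟨H1, hH1, h10, h11⟩ := cal_side hκ p q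
  have hfc : ContinuousOn (fun z => g (t₁, z) - H1 (t₁, z)) (Set.Icc 0 1) := by
    apply ContinuousOn.sub
    · exact hg.comp (by fun_prop) (fun z hz => ⟨⟨ht, le_rfl⟩, hz⟩)
    · exact (hH1.1.continuous.comp (by fun_prop : Continuous fun z : ℝ => (t₁, z))).continuousOn
  set f0 : ℝ → ℝ := Set.IccExtend (zero_le_one (α := ℝ)) 
    ((Set.Icc (0:ℝ) 1).domRestrict (fun z => g (t₁, z) - H1 (t₁, z))) with hf0
  have hf0c : Continuous f0 := (continuousOn_iff_continuous_domRestrict.1 hfc).Icc_extend'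
  have hf0e : ∀ z ∈ Set.Icc (0:ℝ) 1, f0 z = g (t₁, z) - H1 (t₁, z) := by
    intro z hz
    rw [hf0, Set.IccExtend_of_mem _ _ hz]; rfl
  have hb0 : |f0 0| ≤ η / 4 := by
    rw [hf0e 0 (by simp), h10, abs_sub_comm]
    exact (hp t₁ ⟨ht, le_rfl⟩).le
  have hb1 : |f0 1| ≤ η / 4 := by
    rw [hf0e 1 (by simp), h11, abs_sub_comm]
    exact (hq t₁ ⟨ht, le_rfl⟩).le
  obtain ⟨F, ⟨H2, hH2, h20, h21, h2t⟩, hF⟩ := sine_approx (κ := κ) (t₁ := t₁)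
    (fun z => f0 z - ((1 - z) * f0 0 + z * f0 1)) (by fun_prop) (by simp) (by simp) hη4
  refine ⟨_, by simpa using hH1.add hH2, ?_, ?_, ?_⟩
  · intro t ht
    simp only [h20, h10, add_zero]
    linarith [hp t ht]
  · intro t ht
    simp only [h21, h11, add_zero]
    linarith [hq t ht]
  · intro z hz
    have e1 := hF z hz
    simp only [h2t]
    have e2 := hf0e z hz
    rw [abs_le] at *
    obtain ⟨z0, z1⟩ := hz
    constructor <;> nlinarith

lemma Cal.hg {r μ σ κ L c₀ : ℝ} {H : ℝ × ℝ → ℝ} {e : ℝ → ℝ → ℝ} (h : Cal κ H e)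
    (hL : 0 < L) (hκ : κ = σ ^ 2 / 2 / L ^ 2) {p : ℝ × ℝ × ℝ} (hp : 0 < p.2.2) :
    HG r μ σ (fun q => H (q.1, (Real.log q.2.2 - (μ - σ ^ 2 / 2) * q.1 - c₀) / L)) p
      (- e p.1 ((Real.log p.2.2 - (μ - σ ^ 2 / 2) * p.1 - c₀) / L)) := by
  obtain ⟨hs, Ht, Hz, Hzz, h1, h2, h3, he⟩ := h
  obtain ⟨t, x, y⟩ := p
  simp only at hp ⊢
  set m := μ - σ ^ 2 / 2 with hm
  set Z : ℝ → ℝ → ℝ := fun t y => (Real.log y - m * t - c₀) / L with hZ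
  have hLn := hL.ne'
  have hyn := hp.ne'
  have hZt : HasDerivAt (fun s => Z s y) (-(m * 1) / L) t :=
    ((((hasDerivAt_id t).const_mul m).const_sub (Real.log y)).sub_const c₀).div_const L
  have hZy : ∀ y', 0 < y' → HasDerivAt (fun y => Z t y) (y'⁻¹ / L) y' := by
    intro y' hy'
    exact (((Real.hasDerivAt_log hy'.ne').sub_const (m * t)).sub_const c₀).div_const L
  have hev : ∀ᶠ y' in 𝓝 y, 0 < y' := lt_mem_nhds hp
  refine ⟨Ht t (Z t y) + (-(m * 1) / L) * Hz t (Z t y), 0, fun y => Hz t (Z t y) * (y⁻¹ / L),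
    Hzz t (Z t y) * (y⁻¹ / L) * (y⁻¹ / L) + Hz t (Z t y) * (-(y ^ 2)⁻¹ / L), ?_, ?_, ?_, ?_, ?_⟩
  · have hF : HasFDerivAt H (fderiv ℝ H (t, Z t y)) (t, Z t y) :=
      (hs.differentiable (by norm_num) _).hasFDerivAt
    have hc : HasDerivAt (fun s => (s, Z s y)) ((1 : ℝ), -(m * 1) / L) t :=
      (hasDerivAt_id t).prodMk hZt
    have := hF.comp_hasDerivAt t hc
    have e1 : fderiv ℝ H (t, Z t y) (1, 0) = Ht t (Z t y) := by
      have h4 := hF.comp_hasDerivAt (f := fun s => (s, Z t y)) t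
        ((hasDerivAt_id t).prodMk (hasDerivAt_const t (Z t y)))
      exact h4.unique (h1 t (Z t y))
    have e2 : fderiv ℝ H (t, Z t y) (0, 1) = Hz t (Z t y) := by
      have h4 := hF.comp_hasDerivAt (f := fun s => (t, s)) (Z t y)
        ((hasDerivAt_const (Z t y) t).prodMk (hasDerivAt_id (Z t y)))
      exact h4.unique (h2 t (Z t y))
    have e3 : ((1 : ℝ), -(m * 1) / L) = (1, 0) + (-(m * 1) / L) • ((0 : ℝ), (1 : ℝ)) := by
      ext <;> simp
    rw [e3, map_add, map_smul, e1, e2, smul_eq_mul] at this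
    exact this
  · exact hasDerivAt_const x (H (t, Z t y))
  · filter_upwards [hev] with y' hy'
    exact (h2 t (Z t y')).comp y' (hZy y' hy')
  · have q1 : HasDerivAt (fun y => Hz t (Z t y)) (Hzz t (Z t y) * (y⁻¹ / L)) y :=
      (h3 t (Z t y)).comp y (hZy y hp)
    have q2 : HasDerivAt (fun y : ℝ => y⁻¹ / L) (-(y ^ 2)⁻¹ / L) y :=
      (hasDerivAt_inv hyn).div_const L
    exact q1.mul q2
  · rw [← he, hκ]
    have hZe : (Real.log y - m * t - c₀) / L = Z t y := rfl
    rw [hZe]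
    beta_reduce
    generalize Z t y = zz
    simp only [hm]
    field_simp
    ring

/-- the coercive strict subsolution -/
noncomputable def gfun (β b : ℝ) (p : ℝ × ℝ × ℝ) : ℝ :=
  Real.exp (β * (b - p.1)) * (1 + p.2.1 + p.2.2)

lemma gfun_hg {r μ σ β b : ℝ} (p : ℝ × ℝ × ℝ) :
    HG r μ σ (gfun β b) p (Real.exp (β * (b - p.1)) *
      (β * (1 + p.2.1 + p.2.2) - r * p.2.1 - μ * p.2.2)) := by
  unfold gfun
  obtain ⟨t, x, y⟩ := p
  simp only
  refine ⟨Real.exp (β * (b - t)) * (β * (-1)) * (1 + x + y), Real.exp (β * (b - t)) * 1,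
    fun _ => Real.exp (β * (b - t)) * 1, 0, ?_, ?_, ?_, ?_, ?_⟩
  · exact ((((hasDerivAt_id t).const_sub b).const_mul β).exp).mul_const (1 + x + y)
  · exact ((((hasDerivAt_id x).const_add 1).add_const y)).const_mul (Real.exp (β * (b - t)))
  · exact Eventually.of_forall fun y' => ((hasDerivAt_id y').const_add (1 + x)).const_mul (Real.exp (β * (b - t)))
  · exact hasDerivAt_const _ _
  · simp only; ring

lemma gfun_ge {r μ σ b : ℝ} {p : ℝ × ℝ × ℝ} (h1 : 0 ≤ p.2.1) (h2 : 0 ≤ p.2.2) (ht : p.1 ≤ b) :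
    ∃ g, 1 ≤ g ∧ HG r μ σ (gfun (|r| + |μ| + 1) b) p g := by
  refine ⟨_, ?_, gfun_hg p⟩
  have e1 : 1 ≤ Real.exp ((|r| + |μ| + 1) * (b - p.1)) := by
    apply Real.one_le_exp
    apply mul_nonneg <;> [positivity; linarith]
  have e2 : 1 ≤ (|r| + |μ| + 1) * (1 + p.2.1 + p.2.2) - r * p.2.1 - μ * p.2.2 := by
    have a1 : r * p.2.1 ≤ |r| * p.2.1 := mul_le_mul_of_nonneg_right (le_abs_self r) h1
    have a2 : μ * p.2.2 ≤ |μ| * p.2.2 := mul_le_mul_of_nonneg_right (le_abs_self μ) h2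
    have a3 := abs_nonneg r
    have a4 := abs_nonneg μ
    nlinarith [mul_nonneg a3 h2, mul_nonneg a4 h1]
  nlinarith

lemma gfun_contDiff (β b : ℝ) : ContDiff ℝ 2 (gfun β b) := by
  unfold gfun; fun_prop

/-- penalty in the cash variable -/
lemma peny_hg {r μ σ y₀ : ℝ} (p : ℝ × ℝ × ℝ) :
    HG r μ σ (fun q => (q.2.1 * Real.exp (-r * q.1) - y₀) ^ 2) p 0 := by
  obtain ⟨t, x, y⟩ := p
  refine ⟨((2 : ℕ) : ℝ) * (x * Real.exp (-r * t) - y₀) ^ (2 - 1) * (x * (Real.exp (-r * t) * (-r * 1))),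
    ((2 : ℕ) : ℝ) * (x * Real.exp (-r * t) - y₀) ^ (2 - 1) * (1 * Real.exp (-r * t)), fun _ => 0, 0, ?_, ?_, ?_, ?_, ?_⟩
  · exact (((((hasDerivAt_id t).const_mul (-r)).exp).const_mul x).sub_const y₀).pow 2
  · exact (((hasDerivAt_id x).mul_const (Real.exp (-r * t))).sub_const y₀).pow 2
  · exact Eventually.of_forall fun y' => hasDerivAt_const y' ((x * Real.exp (-r * t) - y₀) ^ 2)
  · exact hasDerivAt_const _ _
  · simp only; push_cast; ring

lemma penx_hg {r μ σ : ℝ} (p : ℝ × ℝ × ℝ) :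
    HG r μ σ (fun q => q.2.2 ^ 2 * Real.exp (-(2 * μ + σ ^ 2) * q.1)) p 0 := by
  obtain ⟨t, x, y⟩ := p
  refine ⟨y ^ 2 * (Real.exp (-(2 * μ + σ ^ 2) * t) * (-(2 * μ + σ ^ 2) * 1)), 0,
    fun y => (((2 : ℕ) : ℝ) * y ^ (2 - 1) * 1) * Real.exp (-(2 * μ + σ ^ 2) * t),
    (((2 : ℕ) : ℝ) * 1) * Real.exp (-(2 * μ + σ ^ 2) * t), ?_, ?_, ?_, ?_, ?_⟩
  · exact (((hasDerivAt_id t).const_mul (-(2 * μ + σ ^ 2))).exp).const_mul (y ^ 2)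
  · exact hasDerivAt_const x (y ^ 2 * Real.exp (-(2 * μ + σ ^ 2) * t))
  · exact Eventually.of_forall fun y' => ((hasDerivAt_id y').pow 2).mul_const (Real.exp (-(2 * μ + σ ^ 2) * t))
  · have : HasDerivAt (fun y : ℝ => ((2 : ℕ) : ℝ) * y ^ (2 - 1) * 1) (((2 : ℕ) : ℝ) * 1) y := by
      simpa using (hasDerivAt_id y).const_mul (((2 : ℕ) : ℝ))
    exact this.mul_const _
  · simp only; push_cast; ring

/-! Intervention operator -/

lemma mem_Sbar {x : ℝ × ℝ} : x ∈ Sbar ↔ 0 ≤ x.1 ∧ 0 ≤ x.2 := by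
  unfold Sbar; rw [Set.mem_prod]; rfl

lemma mem_Dset {C : ℝ → ℝ} {x : ℝ × ℝ} {d : ℝ} :
    d ∈ Dset C x ↔ 0 ≤ x.1 - d - C d ∧ 0 ≤ x.2 + d := by
  simp [Dset, Gam, mem_Sbar]

lemma cost_pos {C : ℝ → ℝ} (hC : IsCostFn C) (d : ℝ) : C 0 ≤ C d :=
  hC.2.1 0 d (by simp)

/-- Attainment below the lower envelope. -/
lemma lsc_attain {C : ℝ → ℝ} (hC : IsCostFn C) {a b : ℝ} {v : ℝ → ℝ × ℝ → ℝ}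
    (hv : ContinuousOn (fun p : ℝ × (ℝ × ℝ) => v p.1 p.2) (Set.Icc a b ×ˢ Sbar))
    {t : ℝ} {x : ℝ × ℝ} (ht : t ∈ Set.Icc a b) {c : ℝ}
    (h : ∀ d ∈ Dset C x, c < v t (Gam C x d)) :
    ∃ c' > c, ∀ᶠ p in 𝓝[Set.Icc a b ×ˢ Sbar] (t, x), (c' : EReal) ≤ MopF C v p := by
  have hCc := hC.1
  have hGc : Continuous (fun q : (ℝ × ℝ) × ℝ => Gam C q.1 q.2) := by
    unfold Gam; fun_prop
  have hSc : IsClosed Sbar := isClosed_Ici.prod isClosed_Ici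
  -- uniform gap
  obtain ⟨c', hc', hgap⟩ : ∃ c' > c, ∀ d ∈ Dset C x, c' < v t (Gam C x d) := by
    by_cases hne : (Dset C x).Nonempty
    · have hcomp : IsCompact (Dset C x) := by
        apply (isCompact_Icc (a := -x.2) (b := x.1)).of_isClosed_subset
        · exact hSc.preimage (hGc.comp (by fun_prop : Continuous fun d : ℝ => (x, d)))
        · intro d hd
          rw [mem_Dset] at hd
          have := cost_pos hC d
          have := hC.2.2.1
          constructor <;> linarith [hd.1, hd.2]
      have hvc : ContinuousOn (fun d => v t (Gam C x d)) (Dset C x) := by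
        apply hv.comp (f := fun d => (t, Gam C x d))
        · exact (continuous_const.prodMk (hGc.comp
            (by fun_prop : Continuous fun d : ℝ => (x, d)))).continuousOn
        · intro d hd; exact ⟨ht, hd⟩
      obtain ⟨d, hd, hmin⟩ := hcomp.exists_isMinOn hne hvc
      have h1 := h d hd
      refine ⟨(c + v t (Gam C x d)) / 2, by linarith, fun d' hd' => ?_⟩
      have : v t (Gam C x d) ≤ v t (Gam C x d') := hmin hd'
      linarith
    · exact ⟨c + 1, by linarith, fun d hd => absurd ⟨d, hd⟩ hne⟩
  refine ⟨c', hc', ?_⟩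
  rw [eventually_nhdsWithin_iff]
  have key : ∀ᶠ p in 𝓝 (t, x), ∀ d ∈ Set.Icc (-x.2 - 1) (x.1 + 1),
      p ∈ Set.Icc a b ×ˢ Sbar → d ∈ Dset C p.2 → c' < v p.1 (Gam C p.2 d) := by
    apply isCompact_Icc.eventually_forall_of_forall_eventually
    intro d _
    by_cases hd : d ∈ Dset C x
    · have hcw := hv (t, Gam C x d) ⟨ht, hd⟩
      have h1 : ∀ᶠ q in 𝓝[Set.Icc a b ×ˢ Sbar] (t, Gam C x d), c' < v q.1 q.2 :=
        hcw.eventually (lt_mem_nhds (hgap d hd))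
      rw [eventually_nhdsWithin_iff] at h1
      have hm : Continuous (fun z : (ℝ × (ℝ × ℝ)) × ℝ => (z.1.1, Gam C z.1.2 z.2)) :=
        (by fun_prop : Continuous fun z : (ℝ × (ℝ × ℝ)) × ℝ => z.1.1).prodMk
          (hGc.comp (by fun_prop : Continuous fun z : (ℝ × (ℝ × ℝ)) × ℝ => (z.1.2, z.2)))
      have h2 := (hm.tendsto ((t, x), d)).eventually h1
      filter_upwards [h2] with z hz hzE hzD
      exact hz ⟨hzE.1, hzD⟩
    · have hcl : IsOpen {z : (ℝ × (ℝ × ℝ)) × ℝ | z.2 ∉ Dset C z.1.2} := by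
        have : IsClosed {z : (ℝ × (ℝ × ℝ)) × ℝ | Gam C z.1.2 z.2 ∈ Sbar} :=
          hSc.preimage (hGc.comp (by fun_prop : Continuous fun z : (ℝ × (ℝ × ℝ)) × ℝ => (z.1.2, z.2)))
        exact this.isOpen_compl
      have := hcl.mem_nhds (show ((t, x), d) ∈ _ from hd)
      filter_upwards [this] with z hz _ hzD
      exact absurd hzD hz
  have n1 : ∀ᶠ p : ℝ × (ℝ × ℝ) in 𝓝 (t, x), p.2.1 < x.1 + 1 :=
    (by fun_prop : Continuous fun p : ℝ × (ℝ × ℝ) => p.2.1).continuousAt.eventually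
      (gt_mem_nhds (by simp))
  have n2 : ∀ᶠ p : ℝ × (ℝ × ℝ) in 𝓝 (t, x), p.2.2 < x.2 + 1 :=
    (by fun_prop : Continuous fun p : ℝ × (ℝ × ℝ) => p.2.2).continuousAt.eventually
      (gt_mem_nhds (by simp))
  filter_upwards [key, n1, n2] with p hp hn1 hn2 hpE
  unfold MopF
  refine le_iInf₂ fun d hd => ?_
  have hd' := mem_Dset.1 hd
  have := cost_pos hC d
  have := hC.2.2.1
  exact_mod_cast (hp d ⟨by linarith [hd'.2], by linarith [hd'.1]⟩ hpE hd).le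

/-- Upper bound for the upper envelope. -/
lemma usc_bound {C : ℝ → ℝ} (hC : IsCostFn C) {a b : ℝ} {u : ℝ → ℝ × ℝ → ℝ}
    (hu : ContinuousOn (fun p : ℝ × (ℝ × ℝ) => u p.1 p.2) (Set.Icc a b ×ˢ Sbar))
    {t : ℝ} {x : ℝ × ℝ} (ht : t ∈ Set.Icc a b)
    {d : ℝ} (hd : d ∈ Dset C x) (hnd : 0 < x.1 + x.2 - C (-x.2)) :
    uscEnv (MopF C u) (Set.Icc a b ×ˢ Sbar) (t, x) ≤ (u t (Gam C x d) : EReal) := by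
  have hCc := hC.1
  have hGc : Continuous (fun q : (ℝ × ℝ) × ℝ => Gam C q.1 q.2) := by
    unfold Gam; fun_prop
  have hmono := hC.2.2.2.1
  -- interior transactions
  have hint : ∀ d, 0 < x.1 - d - C d → 0 < x.2 + d →
      uscEnv (MopF C u) (Set.Icc a b ×ˢ Sbar) (t, x) ≤ (u t (Gam C x d) : EReal) := by
    intro d h1 h2
    have hcw := hu (t, Gam C x d) ⟨ht, mem_Sbar.2 ⟨h1.le, h2.le⟩⟩
    have hm : Continuous (fun z : ℝ × (ℝ × ℝ) => (z.1, Gam C z.2 d)) :=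
      continuous_fst.prodMk (hGc.comp (by fun_prop : Continuous fun z : ℝ × (ℝ × ℝ) => (z.2, d)))
    have n1 : ∀ᶠ p : ℝ × (ℝ × ℝ) in 𝓝 (t, x), 0 < p.2.1 - d - C d :=
      (by fun_prop : Continuous fun p : ℝ × (ℝ × ℝ) => p.2.1 - d - C d).continuousAt.eventually
        (lt_mem_nhds h1)
    have n2 : ∀ᶠ p : ℝ × (ℝ × ℝ) in 𝓝 (t, x), 0 < p.2.2 + d :=
      (by fun_prop : Continuous fun p : ℝ × (ℝ × ℝ) => p.2.2 + d).continuousAt.eventually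
        (lt_mem_nhds h2)
    refine le_of_forall_gt_imp_ge_of_dense fun c hc => ?_
    have h1 : ∀ᶠ q in 𝓝[Set.Icc a b ×ˢ Sbar] (t, Gam C x d), ((u q.1 q.2 : ℝ) : EReal) < c := by
      have : Tendsto (fun q : ℝ × (ℝ × ℝ) => ((u q.1 q.2 : ℝ) : EReal))
          (𝓝[Set.Icc a b ×ˢ Sbar] (t, Gam C x d)) (𝓝 ((u t (Gam C x d) : ℝ) : EReal)) :=
        (continuous_coe_real_ereal.tendsto _).comp hcw
      exact this.eventually (gt_mem_nhds hc)
    rw [eventually_nhdsWithin_iff] at h1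
    have h2 := (hm.tendsto (t, x)).eventually h1
    unfold uscEnv
    apply Filter.limsup_le_of_le (by isBoundedDefault)
    filter_upwards [eventually_nhdsWithin_of_eventually_nhds h2,
      eventually_nhdsWithin_of_eventually_nhds n1,
      eventually_nhdsWithin_of_eventually_nhds n2, self_mem_nhdsWithin] with z hz hz1 hz2 hzE
    have hD : d ∈ Dset C z.2 := mem_Dset.2 ⟨hz1.le, hz2.le⟩
    unfold MopF
    exact (iInf₂_le d hD).trans (hz ⟨hzE.1, hD⟩).le
  -- approximate d by interior transactions: d + s*(e - d), s → 0
  obtain ⟨hd1, hd2⟩ := mem_Dset.1 hd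
  -- an interior transaction
  obtain ⟨e, he1, he2⟩ : ∃ e, 0 < x.1 - e - C e ∧ 0 < x.2 + e := by
    have hc0 : Tendsto (fun e => x.1 - e - C e) (𝓝[>] (-x.2)) (𝓝 (x.1 - (-x.2) - C (-x.2))) :=
      ((by fun_prop : Continuous fun e => x.1 - e - C e).tendsto _).mono_left nhdsWithin_le_nhds
    have := hc0.eventually (lt_mem_nhds (show 0 < x.1 - (-x.2) - C (-x.2) by linarith))
    obtain ⟨e, h1, h2⟩ := (this.and self_mem_nhdsWithin).exists
    have h2' : -x.2 < e := h2
    exact ⟨e, h1, by linarith⟩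
  have hseg : ∀ s : ℝ, 0 < s → s < 1 → 0 < x.1 - (d + s * (e - d)) - C (d + s * (e - d)) ∧
      0 < x.2 + (d + s * (e - d)) := by
    intro s hs0 hs1
    constructor
    · rcases lt_trichotomy d e with h | h | h
      · have : d + s * (e - d) < e := by nlinarith
        have := hmono this
        simp only at this; linarith
      · subst h; simpa using he1
      · have : d + s * (e - d) < d := by nlinarith
        have := hmono this
        simp only at this; linarith
    · nlinarith
  have hlim : Tendsto (fun s : ℝ => ((u t (Gam C x (d + s * (e - d))) : ℝ) : EReal)) (𝓝[>] 0)
      (𝓝 ((u t (Gam C x d) : ℝ) : EReal)) := by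
    apply (continuous_coe_real_ereal.tendsto _).comp
    have hcw := hu (t, Gam C x d) ⟨ht, hd⟩
    have hm : Continuous (fun s : ℝ => (t, Gam C x (d + s * (e - d)))) :=
      continuous_const.prodMk (hGc.comp (by fun_prop : Continuous fun s : ℝ => (x, d + s * (e - d))))
    have h0 : Tendsto (fun s : ℝ => (t, Gam C x (d + s * (e - d)))) (𝓝[>] 0)
        (𝓝[Set.Icc a b ×ˢ Sbar] (t, Gam C x d)) := by
      rw [tendsto_nhdsWithin_iff]
      constructor
      · have := (hm.tendsto 0).mono_left (nhdsWithin_le_nhds (s := Set.Ioi 0))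
        simpa using this
      · filter_upwards [Ioo_mem_nhdsGT (show (0:ℝ) < 1 by norm_num)] with s hs
        exact ⟨ht, mem_Sbar.2 ⟨(hseg s hs.1 hs.2).1.le, (hseg s hs.1 hs.2).2.le⟩⟩
    exact hcw.tendsto.comp h0
  apply ge_of_tendsto hlim
  filter_upwards [Ioo_mem_nhdsGT (show (0:ℝ) < 1 by norm_num)] with s hs
  exact hint _ (hseg s hs.1 hs.2).1 (hseg s hs.1 hs.2).2

def SubI (C : ℝ → ℝ) (r μ σ a b : ℝ) (u : ℝ → ℝ × ℝ → ℝ) : Prop :=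
  ∀ tb : ℝ, ∀ xb : ℝ × ℝ, tb ∈ Set.Ico a b → xb ∈ Sset →
    ∀ φ : ℝ → ℝ → ℝ → ℝ, IsTest a b φ →
      (∀ t ∈ Set.Ico a b, ∀ x ∈ Sset, u t x - φ t x.1 x.2 ≤ u tb xb - φ tb xb.1 xb.2) →
        gen r μ σ φ tb xb.1 xb.2 ≤ 0 ∧
        (u tb xb : EReal) ≤ uscEnv (MopF C u) (Set.Icc a b ×ˢ Sbar) (tb, xb)

def SupI (C : ℝ → ℝ) (r μ σ a b : ℝ) (v : ℝ → ℝ × ℝ → ℝ) : Prop :=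
  ∀ tb : ℝ, ∀ xb : ℝ × ℝ, tb ∈ Set.Ico a b → xb ∈ Sset →
    ∀ φ : ℝ → ℝ → ℝ → ℝ, IsTest a b φ →
      (∀ t ∈ Set.Ico a b, ∀ x ∈ Sset, v tb xb - φ tb xb.1 xb.2 ≤ v t x - φ t x.1 x.2) →
        0 ≤ gen r μ σ φ tb xb.1 xb.2 ∨
        lscEnv (MopF C v) (Set.Icc a b ×ˢ Sbar) (tb, xb) ≤ (v tb xb : EReal)

def BdW (a b W : ℝ) (u : ℝ → ℝ × ℝ → ℝ) : Prop :=
  ∀ t ∈ Set.Icc a b, ∀ x ∈ Sbar, 0 ≤ u t x ∧ u t x ≤ W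

lemma domI_sub {a b : ℝ} : domI a b ⊆ Set.Icc a b ×ˢ Sbar := by
  rintro ⟨t, x, y⟩ ⟨h1, h2, h3⟩
  exact ⟨⟨h1, h2.le⟩, h3.1⟩

lemma isTest_of {a b : ℝ} {ψ : ℝ × ℝ × ℝ → ℝ} (h : ContDiff ℝ 2 ψ) :
    IsTest a b (fun t x y => ψ (t, x, y)) :=
  ⟨Set.univ, isOpen_univ, Set.subset_univ _, h.contDiffOn⟩

lemma sub_local {C : ℝ → ℝ} {r μ σ a b W : ℝ} {u : ℝ → ℝ × ℝ → ℝ} (hu : SubI C r μ σ a b u)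
    (hb : BdW a b W u) {p : ℝ × ℝ × ℝ} (hp : p ∈ domI a b) {φ : ℝ × ℝ × ℝ → ℝ}
    (hφ : ContDiffAt ℝ 2 φ p)
    (hmin : ∀ᶠ q in 𝓝[domI a b] p, -u p.1 p.2 - φ p ≤ -u q.1 q.2 - φ q) :
    0 ≤ genp r μ σ φ p ∧ (u p.1 p.2 : EReal) ≤ uscEnv (MopF C u) (Set.Icc a b ×ˢ Sbar) p := by
  obtain ⟨ψ, h1, h2, h3⟩ := localize (f := fun q => -u q.1 q.2) (W := W)
    (fun q hq => by have := hb _ (domI_sub hq).1 _ (domI_sub hq).2; linarith [this.2]) hφ hmin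
  obtain ⟨p1, p2, p3⟩ := hp
  have := hu p.1 p.2 ⟨p1, p2⟩ p3 (fun t x y => - ψ (t, x, y)) (isTest_of h1.neg) (by
    intro t ht x hx
    have := h3 (t, x) ⟨ht.1, ht.2, hx⟩
    simp only at this
    change u t x - - ψ (t, x) ≤ u p.1 p.2 - - ψ p
    linarith)
  refine ⟨?_, this.2⟩
  have e1 : genp r μ σ (fun q => - ψ q) p ≤ 0 := this.1
  rw [genp_neg, genp_congr h2] at e1
  linarith

lemma sub_LSuper {C : ℝ → ℝ} {r μ σ a b W : ℝ} {u : ℝ → ℝ × ℝ → ℝ} (hu : SubI C r μ σ a b u)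
    (hb : BdW a b W u) (O : Set (ℝ × ℝ × ℝ)) : LSuper r μ σ (domI a b) O (fun q => -u q.1 q.2) :=
  fun _ hp _ _ hφ hmin => (sub_local hu hb hp hφ hmin).1

lemma sup_LSuper {C : ℝ → ℝ} {r μ σ a b W : ℝ} {v : ℝ → ℝ × ℝ → ℝ} (hv : SupI C r μ σ a b v)
    (hb : BdW a b W v) (O : Set (ℝ × ℝ × ℝ))
    (hO : ∀ p ∈ domI a b, p ∈ O →
      (v p.1 p.2 : EReal) < lscEnv (MopF C v) (Set.Icc a b ×ˢ Sbar) p) :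
    LSuper r μ σ (domI a b) O (fun q => v q.1 q.2) := by
  intro p hp hpO φ hφ hmin
  obtain ⟨ψ, h1, h2, h3⟩ := localize (f := fun q => v q.1 q.2) (W := 0)
    (fun q hq => by have := hb _ (domI_sub hq).1 _ (domI_sub hq).2; linarith [this.1]) hφ hmin
  have hlt := hO p hp hpO
  obtain ⟨p1, p2, p3⟩ := hp
  have := hv p.1 p.2 ⟨p1, p2⟩ p3 (fun t x y => ψ (t, x, y)) (isTest_of h1) (by
    intro t ht x hx
    exact h3 (t, x) ⟨ht.1, ht.2, hx⟩)
  rcases this with h | h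
  · have e1 : 0 ≤ genp r μ σ ψ p := h
    rwa [genp_congr h2] at e1
  · exact absurd h (not_le.2 hlt)

/-- Obstacle inequality at every interior point. -/
lemma sub_obs {C : ℝ → ℝ} {r μ σ a b W : ℝ} {u : ℝ → ℝ × ℝ → ℝ} (hu : SubI C r μ σ a b u)
    (hb : BdW a b W u)
    (huc : ContinuousOn (fun p : ℝ × (ℝ × ℝ) => u p.1 p.2) (Set.Icc a b ×ˢ Sbar))
    {p : ℝ × ℝ × ℝ} (hp : p ∈ domI a b) :
    (u p.1 p.2 : EReal) ≤ uscEnv (MopF C u) (Set.Icc a b ×ˢ Sbar) p := by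
  set E : Set (ℝ × (ℝ × ℝ)) := Set.Icc a b ×ˢ Sbar with hE
  by_contra hcon
  rw [not_le] at hcon
  obtain ⟨c, hc1, hc2⟩ := EReal.lt_iff_exists_real_btwn.1 hcon
  have hc2' : c < u p.1 p.2 := by exact_mod_cast hc2
  have m1 : ∀ᶠ q in 𝓝[E] p, MopF C u q < c := eventually_lt_of_limsup_lt hc1
  have m2 : ∀ᶠ q in 𝓝 p, q ∈ E → MopF C u q < c := eventually_nhdsWithin_iff.1 m1
  have m2' := m2.eventually_nhds
  have m3 : ∀ᶠ q in 𝓝 p, q ∈ E → c < u q.1 q.2 :=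
    eventually_nhdsWithin_iff.1 ((huc p (domI_sub hp)).eventually (lt_mem_nhds hc2'))
  have m4 : ∀ᶠ q : ℝ × ℝ × ℝ in 𝓝 p, q.1 < b :=
    continuous_fst.continuousAt.eventually (gt_mem_nhds hp.2.1)
  have hp0 : (p.2.1, p.2.2) ≠ (0, 0) := hp.2.2.2
  have m5 : ∀ᶠ q : ℝ × ℝ × ℝ in 𝓝 p, (q.2.1, q.2.2) ≠ (0, 0) :=
    (by fun_prop : Continuous fun q : ℝ × ℝ × ℝ => (q.2.1, q.2.2)).continuousAt.eventually
      (isOpen_ne.mem_nhds hp0)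
  obtain ⟨ε, hε, hball⟩ := Metric.eventually_nhds_iff_ball.1 (m2'.and (m3.and (m4.and m5)))
  -- squared distance
  set sq : ℝ × ℝ × ℝ → ℝ := fun q => (q.1 - p.1) ^ 2 + (q.2.1 - p.2.1) ^ 2 + (q.2.2 - p.2.2) ^ 2
    with hsq
  have hsqs : ContDiff ℝ 2 sq := by rw [hsq]; fun_prop
  set A := Metric.closedBall p (ε / 2) ∩ E with hA
  have hEc : IsClosed E := isClosed_Icc.prod (isClosed_Ici.prod isClosed_Ici)
  have hAc : IsCompact A := (isCompact_closedBall p (ε / 2)).inter_right hEc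
  have hpA : p ∈ A := ⟨Metric.mem_closedBall_self (by positivity), domI_sub hp⟩
  have hA' : ∀ q ∈ A, q ∈ Metric.ball p ε := fun q hq =>
    Metric.closedBall_subset_ball (by linarith) hq.1
  set N : ℝ := (W + 1) * 4 / ε ^ 2 with hN
  have hfc : ContinuousOn (fun q : ℝ × ℝ × ℝ => u q.1 q.2 - N * sq q) A :=
    (huc.mono Set.inter_subset_right).sub (hsqs.continuous.continuousOn.const_smul N)
  obtain ⟨q, hqA, hq⟩ := hAc.exists_isMaxOn ⟨p, hpA⟩ hfc
  have hW : 0 ≤ W := by have := hb _ (domI_sub hp).1 _ (domI_sub hp).2; linarith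
  have hNp : 0 < N := by positivity
  have hqE := hqA.2
  obtain ⟨k1, k2, k3, k4⟩ := hball q (hA' q hqA)
  have hqp := hq hpA
  simp only [Set.mem_setOf_eq] at hqp
  have hsp : sq p = 0 := by simp [hsq]
  rw [hsp] at hqp
  have hup := hb _ (domI_sub hp).1 _ (domI_sub hp).2
  have huq := hb _ hqE.1 _ hqE.2
  have hsmall : N * sq q ≤ W := by linarith
  have hdist : dist q p < ε / 2 := by
    by_contra hge
    rw [not_lt] at hge
    have hd : dist q p ^ 2 ≤ sq q := by
      rw [Prod.dist_eq, Prod.dist_eq, Real.dist_eq, Real.dist_eq, Real.dist_eq]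
      rcases max_choice (|q.1 - p.1|) (max (|q.2.1 - p.2.1|) (|q.2.2 - p.2.2|)) with h | h
      · rw [h, sq_abs, hsq]; simp only; nlinarith [sq_nonneg (q.2.1 - p.2.1), sq_nonneg (q.2.2 - p.2.2)]
      · rw [h]
        rcases max_choice (|q.2.1 - p.2.1|) (|q.2.2 - p.2.2|) with h | h
        · rw [h, sq_abs, hsq]; simp only; nlinarith [sq_nonneg (q.1 - p.1), sq_nonneg (q.2.2 - p.2.2)]
        · rw [h, sq_abs, hsq]; simp only; nlinarith [sq_nonneg (q.1 - p.1), sq_nonneg (q.2.1 - p.2.1)]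
    have h2 : ε ^ 2 / 4 ≤ sq q := by nlinarith
    have h3 : N * (ε ^ 2 / 4) ≤ N * sq q := mul_le_mul_of_nonneg_left h2 hNp.le
    have h4 : N * (ε ^ 2 / 4) = W + 1 := by rw [hN]; field_simp
    linarith
  have hqD : q ∈ domI a b := ⟨hqE.1.1, k3, hqE.2, k4⟩
  have hloc := (sub_local hu hb hqD (φ := fun z => - (N * sq z)) (by
      exact ((contDiff_const.mul hsqs).neg).contDiffAt) (by
    have : ∀ᶠ z in 𝓝 q, z ∈ Metric.ball p (ε / 2) := Metric.isOpen_ball.mem_nhds hdist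
    filter_upwards [eventually_nhdsWithin_of_eventually_nhds this, self_mem_nhdsWithin] with z hz hzD
    have := hq (show z ∈ A from ⟨Metric.ball_subset_closedBall hz, domI_sub hzD⟩)
    simp only [Set.mem_setOf_eq] at this
    linarith)).2
  have hle : uscEnv (MopF C u) E q ≤ c := by
    unfold uscEnv
    apply Filter.limsup_le_of_le (by isBoundedDefault)
    exact (eventually_nhdsWithin_iff.2 k1).mono fun z hz => hz.le
  have hfin : u q.1 q.2 ≤ c := by exact_mod_cast hloc.trans hle
  linarith [k2 hqE]

/-- No jump at a maximum of `u - ε g - v`. -/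
lemma no_jump {C : ℝ → ℝ} (hC : IsCostFn C) {a b W ε β : ℝ} {u v : ℝ → ℝ × ℝ → ℝ}
    (hε : 0 < ε)
    (hub : BdW a b W u) (hv0 : ∀ t ∈ Set.Icc a b, v t (0, 0) = W)
    (huc : ContinuousOn (fun p : ℝ × (ℝ × ℝ) => u p.1 p.2) (Set.Icc a b ×ˢ Sbar))
    {p : ℝ × ℝ × ℝ} (hp : p ∈ Set.Icc a b ×ˢ Sbar)
    (hpos : 0 < u p.1 p.2 - ε * gfun β b p - v p.1 p.2)
    (hmax : ∀ q ∈ Set.Icc a b ×ˢ Sbar, u q.1 q.2 - ε * gfun β b q - v q.1 q.2 ≤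
      u p.1 p.2 - ε * gfun β b p - v p.1 p.2)
    (hobs : (u p.1 p.2 : EReal) ≤ uscEnv (MopF C u) (Set.Icc a b ×ˢ Sbar) p) :
    ∀ d ∈ Dset C p.2, v p.1 p.2 < v p.1 (Gam C p.2 d) := by
  intro d hd
  by_contra hcon
  rw [not_lt] at hcon
  obtain ⟨t, x⟩ := p
  have hd' := mem_Dset.1 hd
  have hx := mem_Sbar.1 hp.2
  have hC0 := hC.2.2.1
  have hCd := cost_pos hC d
  simp only at *
  have hge : -x.2 ≤ d := by linarith
  have hmon : -x.2 + C (-x.2) ≤ d + C d := hC.2.2.2.1.monotone hge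
  have hnn : 0 ≤ x.1 + x.2 - C (-x.2) := by linarith
  have hgp : 0 < gfun β b (t, x) := by
    unfold gfun; have := Real.exp_pos (β * (b - t)); simp only; nlinarith [hx.1, hx.2]
  rcases hnn.lt_or_eq with h | h
  · have h1 : u t x ≤ u t (Gam C x d) := by
      exact_mod_cast hobs.trans (usc_bound hC huc hp.1 hd h)
    have h2 := hmax (t, Gam C x d) ⟨hp.1, hd⟩
    have h3 : gfun β b (t, Gam C x d) < gfun β b (t, x) := by
      unfold gfun Gam
      simp only
      apply mul_lt_mul_of_pos_left _ (Real.exp_pos _)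
      linarith
    simp only at h2
    nlinarith
  · have hdx : d = -x.2 := by
      by_contra hne
      have : -x.2 < d := lt_of_le_of_ne hge (Ne.symm hne)
      have := hC.2.2.2.1 this
      simp only at this
      linarith
    have hG : Gam C x d = (0, 0) := by
      unfold Gam
      rw [hdx]
      ext <;> simp only <;> linarith
    rw [hG, hv0 t hp.1] at hcon
    have := (hub t hp.1 x hp.2).2
    nlinarith

lemma no_jump_nhd {C : ℝ → ℝ} (hC : IsCostFn C) {a b : ℝ} {v : ℝ → ℝ × ℝ → ℝ}
    (hvc : ContinuousOn (fun p : ℝ × (ℝ × ℝ) => v p.1 p.2) (Set.Icc a b ×ˢ Sbar))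
    {p : ℝ × ℝ × ℝ} (hp : p ∈ Set.Icc a b ×ˢ Sbar)
    (h : ∀ d ∈ Dset C p.2, v p.1 p.2 < v p.1 (Gam C p.2 d)) :
    ∀ᶠ q in 𝓝 p, q ∈ Set.Icc a b ×ˢ Sbar →
      (v q.1 q.2 : EReal) < lscEnv (MopF C v) (Set.Icc a b ×ˢ Sbar) q := by
  obtain ⟨c, hc, hev⟩ := lsc_attain hC hvc hp.1 h
  have e1 := (eventually_nhdsWithin_iff.1 hev).eventually_nhds
  have e2 : ∀ᶠ q in 𝓝 p, q ∈ Set.Icc a b ×ˢ Sbar → v q.1 q.2 < c :=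
    eventually_nhdsWithin_iff.1 ((hvc p hp).eventually (gt_mem_nhds hc))
  filter_upwards [e1, e2] with q h1 h2 hq
  have : (c : EReal) ≤ lscEnv (MopF C v) (Set.Icc a b ×ˢ Sbar) q := by
    unfold lscEnv
    apply Filter.le_liminf_of_le (by isBoundedDefault)
    exact eventually_nhdsWithin_iff.2 h1
  refine lt_of_lt_of_le ?_ this
  exact_mod_cast h2 hq

lemma local0 {r μ σ a b ε M : ℝ} {u v : ℝ → ℝ × ℝ → ℝ} {p : ℝ × ℝ × ℝ} {N : Set (ℝ × ℝ × ℝ)}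
    (hN : N ∈ 𝓝 p) (hv : LSuper r μ σ (domI a b) N (fun q => v q.1 q.2))
    (hu : LSuper r μ σ (domI a b) N (fun q => -u q.1 q.2))
    (huc : ContinuousOn (fun p : ℝ × (ℝ × ℝ) => u p.1 p.2) (Set.Icc a b ×ˢ Sbar))
    (hvc : ContinuousOn (fun p : ℝ × (ℝ × ℝ) => v p.1 p.2) (Set.Icc a b ×ˢ Sbar))
    (hε : 0 < ε) (hp : p ∈ domI a b) (hx : p.2.2 = 0)
    (hM : M = u p.1 p.2 - ε * gfun (|r| + |μ| + 1) b p - v p.1 p.2)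
    (hmax : ∀ q ∈ Set.Icc a b ×ˢ Sbar,
      u q.1 q.2 - ε * gfun (|r| + |μ| + 1) b q - v q.1 q.2 ≤ M) : False := by
  set β := |r| + |μ| + 1 with hβ
  obtain ⟨tb, xb, yb⟩ := p
  simp only at hx
  subst hx
  have hp1 : a ≤ tb := hp.1
  have hp2 : tb < b := hp.2.1
  have hxb : 0 < xb := by
    have h1 : 0 ≤ xb := (mem_Sbar.1 hp.2.2.1).1
    have h2 : (xb, (0:ℝ)) ≠ (0, 0) := hp.2.2.2
    rcases h1.lt_or_eq with h | h
    · exact h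
    · exact absurd (by rw [← h]) h2
  set y₀ := xb * Real.exp (-r * tb) with hy₀
  set Ψ : ℝ × ℝ × ℝ → ℝ × ℝ × ℝ := fun q => (q.1, q.2.1 * Real.exp (r * q.1), q.2.2) with hΨ
  have hΨc : Continuous Ψ := by rw [hΨ]; fun_prop
  have hexp : ∀ t, Real.exp (r * t) * Real.exp (-r * t) = 1 := by
    intro t; rw [← Real.exp_add]; simp
  have hexp' : ∀ t, Real.exp (-r * t) * Real.exp (r * t) = 1 := by
    intro t; rw [← Real.exp_add]; simp
  have hΨp : Ψ (tb, y₀, 0) = (tb, xb, 0) := by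
    simp only [hΨ, hy₀]; rw [mul_assoc, hexp', mul_one]
  have hN' : ∀ᶠ q in 𝓝 (tb, y₀, (0:ℝ)), Ψ q ∈ N ∧ (Ψ q).1 < b ∧ 0 < (Ψ q).2.1 := by
    have h1 : ∀ᶠ q in 𝓝 (Ψ (tb, y₀, 0)), q ∈ N ∧ q.1 < b ∧ 0 < q.2.1 := by
      rw [hΨp]
      refine Filter.Eventually.and hN (Filter.Eventually.and ?_ ?_)
      · exact continuous_fst.continuousAt.eventually (gt_mem_nhds hp2)
      · exact (by fun_prop : Continuous fun q : ℝ × ℝ × ℝ => q.2.1).continuousAt.eventually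
          (lt_mem_nhds hxb)
    exact hΨc.continuousAt.eventually h1
  obtain ⟨ρ, hρ, hball⟩ := Metric.nhds_basis_closedBall.eventually_iff.1 hN'
  set t₁ := tb + ρ with ht₁
  set B : Set (ℝ × ℝ × ℝ) := Set.Icc tb t₁ ×ˢ Set.Icc (y₀ - ρ) (y₀ + ρ) ×ˢ Set.Icc 0 ρ with hB
  have hBall : ∀ q ∈ B, Ψ q ∈ N ∧ (Ψ q).1 < b ∧ 0 < (Ψ q).2.1 := by
    rintro ⟨t, y, z⟩ ⟨⟨q1, q2⟩, ⟨q3, q4⟩, q5, q6⟩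
    simp only at q1 q2 q3 q4 q5 q6
    apply hball
    rw [Metric.mem_closedBall, Prod.dist_eq, Prod.dist_eq, Real.dist_eq, Real.dist_eq, Real.dist_eq]
    refine max_le ?_ (max_le ?_ ?_) <;> rw [abs_le] <;> simp only <;> constructor <;> linarith
  set K := Ψ '' B with hK
  have hKc : IsCompact K :=
    (isCompact_Icc.prod (isCompact_Icc.prod isCompact_Icc)).image hΨc
  have hKD : K ⊆ domI a b := by
    rintro _ ⟨q, hq, rfl⟩
    obtain ⟨h1, h2, h3⟩ := hBall q hq
    refine ⟨hp1.trans hq.1.1, h2, mem_Sbar.2 ⟨h3.le, hq.2.2.1⟩, ?_⟩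
    intro h
    have : (Ψ q).2.1 = 0 := congrArg Prod.fst h
    linarith
  have hKE : K ⊆ Set.Icc a b ×ˢ Sbar := hKD.trans domI_sub
  have hmemK : ∀ q : ℝ × ℝ × ℝ, q.1 ∈ Set.Icc tb t₁ →
      q.2.1 * Real.exp (-r * q.1) ∈ Set.Icc (y₀ - ρ) (y₀ + ρ) → q.2.2 ∈ Set.Icc 0 ρ → q ∈ K := by
    rintro ⟨t, x, z⟩ h1 h2 h3
    refine ⟨(t, x * Real.exp (-r * t), z), ⟨h1, h2, h3⟩, ?_⟩
    simp only [hΨ]; rw [mul_assoc, hexp', mul_one]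
  set c : ℝ → ℝ × ℝ × ℝ := fun t => (t, y₀ * Real.exp (r * t), 0) with hc
  have hcK : ∀ t ∈ Set.Icc tb t₁, c t ∈ K := by
    intro t ht
    exact ⟨(t, y₀, 0), ⟨ht, ⟨by simp only; linarith, by simp only; linarith⟩, le_rfl, hρ.le⟩, rfl⟩
  set O : Set (ℝ × ℝ × ℝ) := {q | tb < q.1 ∧ q.1 < t₁ ∧
    y₀ - ρ < q.2.1 * Real.exp (-r * q.1) ∧ q.2.1 * Real.exp (-r * q.1) < y₀ + ρ ∧ q.2.2 < ρ} with hO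
  have hOo : IsOpen O := by
    refine IsOpen.and ?_ (IsOpen.and ?_ (IsOpen.and ?_ (IsOpen.and ?_ ?_))) <;>
      exact isOpen_lt (by fun_prop) (by fun_prop)
  have hOK : ∀ q ∈ O, q ∈ domI a b → q ∈ K := by
    intro q hq hqD
    obtain ⟨h1, h2, h3, h4, h5⟩ := hq
    exact hmemK q ⟨h1.le, h2.le⟩ ⟨h3.le, h4.le⟩ ⟨(mem_Sbar.1 hqD.2.2.1).2, h5.le⟩
  have hON : ∀ q ∈ O, q ∈ domI a b → q ∈ N := by
    intro q hq hqD
    obtain ⟨z, hz, rfl⟩ := hOK q hq hqD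
    exact (hBall z hz).1
  have hv' : LSuper r μ σ (domI a b) O (fun q => v q.1 q.2) :=
    fun q hqD hqO => hv q hqD (hON q hqO hqD)
  have hu' : LSuper r μ σ (domI a b) O (fun q => -u q.1 q.2) :=
    fun q hqD hqO => hu q hqD (hON q hqO hqD)
  set pq : ℝ × ℝ × ℝ → ℝ := fun q => (q.2.1 * Real.exp (-r * q.1) - y₀) ^ 2 +
    q.2.2 ^ 2 * Real.exp (-(2 * μ + σ ^ 2) * q.1) with hpq
  have hpqs : ContDiff ℝ 2 pq := by rw [hpq]; fun_prop
  have hpqg : ∀ q, HG r μ σ pq q 0 := by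
    intro q
    have := (peny_hg (r := r) (μ := μ) (σ := σ) (y₀ := y₀) q).add (penx_hg q)
    rwa [add_zero] at this
  have hpq0 : ∀ q, 0 ≤ pq q := by
    intro q; simp only [hpq]; positivity
  have hpqc : ∀ t, pq (c t) = 0 := by
    intro t; simp only [hpq, hc]; rw [mul_assoc, hexp]; simp
  have hbdry : ∀ q ∈ K, q ∉ O → pq q = 0 → q.1 ≠ tb → q = c t₁ := by
    rintro q hqK hqO hq0 hqt
    have e1 : (q.2.1 * Real.exp (-r * q.1) - y₀) ^ 2 = 0 := by
      have h1 := sq_nonneg (q.2.1 * Real.exp (-r * q.1) - y₀)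
      have h2 : 0 ≤ q.2.2 ^ 2 * Real.exp (-(2 * μ + σ ^ 2) * q.1) := by positivity
      simp only [hpq] at hq0; linarith
    have e2 : q.2.2 = 0 := by
      have h2 : q.2.2 ^ 2 * Real.exp (-(2 * μ + σ ^ 2) * q.1) = 0 := by
        simp only [hpq] at hq0; linarith
      rcases mul_eq_zero.1 h2 with h | h
      · exact pow_eq_zero_iff (by norm_num) |>.1 h
      · exact absurd h (Real.exp_pos _).ne'
    have e3 : q.2.1 * Real.exp (-r * q.1) = y₀ := by
      have := pow_eq_zero_iff (by norm_num) |>.1 e1; linarith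
    have e4 : q.1 = t₁ := by
      obtain ⟨z, hz, rfl⟩ := hqK
      have hz1 : tb ≤ (Ψ z).1 := hz.1.1
      have hz2 : (Ψ z).1 ≤ t₁ := hz.1.2
      by_contra hne
      apply hqO
      refine ⟨lt_of_le_of_ne hz1 (Ne.symm hqt), lt_of_le_of_ne hz2 hne, ?_, ?_, ?_⟩
      · rw [e3]; linarith
      · rw [e3]; linarith
      · rw [e2]; exact hρ
    obtain ⟨t, x, z⟩ := q
    simp only at e2 e3 e4
    subst e2 e4
    simp only [hc]
    rw [← e3, mul_assoc, hexp', mul_one]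
  have hgs := gfun_contDiff β b
  -- comparison for v
  have hV := MP (t₀ := tb) (Φ := fun _ => v (c t₁).1 (c t₁).2) hv' hOo hKc hOK hKD (hvc.mono hKE)
    continuousOn_const hpqs.continuous.continuousOn (fun _ _ _ => contDiffAt_const)
    (fun q _ _ => hpqs.contDiffAt) (fun q _ _ => ⟨0, le_rfl, HG.const _⟩) (fun q _ _ => hpqg q)
    (fun q _ => hpq0 q) (fun q h1 h2 h3 h4 => by rw [hbdry q h1 h2 h3 h4])
  have hU := MP (t₀ := tb) (Φ := fun q => (-1) * (ε * gfun β b q + (ε * q.1 +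
      (u (c t₁).1 (c t₁).2 - ε * gfun β b (c t₁) - ε * t₁)))) hu' hOo hKc hOK hKD (huc.mono hKE).neg
    (by
      apply Continuous.continuousOn
      have := hgs.continuous
      fun_prop) hpqs.continuous.continuousOn
    (fun q _ _ => by
      apply ContDiff.contDiffAt
      fun_prop)
    (fun q _ _ => hpqs.contDiffAt) (fun q _ hqD => by
      obtain ⟨g, hg, hg'⟩ := gfun_ge (r := r) (μ := μ) (σ := σ) (p := q) (b := b)
        (mem_Sbar.1 hqD.2.2.1).1 (mem_Sbar.1 hqD.2.2.1).2 hqD.2.1.le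
      refine ⟨_, ?_, ((hg'.const_mul ε).add ((HG.time (f := fun t => ε * t) (f' := ε * 1)
        ((hasDerivAt_id q.1).const_mul ε)).add (HG.const _))).const_mul (-1)⟩
      nlinarith) (fun q _ _ => hpqg q)
    (fun q _ => hpq0 q) (fun q h1 h2 h3 h4 => by
      rw [hbdry q h1 h2 h3 h4]
      have : (c t₁).1 = t₁ := rfl
      rw [this]
      linarith)
  have htb1 : tb < t₁ := by linarith
  have hfin : ∀ t ∈ Set.Ioo tb t₁, u (c t).1 (c t).2 - ε * gfun β b (c t) - v (c t).1 (c t).2 ≤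
      M - ε * (t₁ - t) := by
    intro t ht
    have k1 := hV (c t) (hcK t ⟨ht.1.le, ht.2.le⟩) (hpqc t) ht.1
    have k2 := hU (c t) (hcK t ⟨ht.1.le, ht.2.le⟩) (hpqc t) ht.1
    have k3 := hmax (c t₁) (hKE (hcK t₁ ⟨htb1.le, le_rfl⟩))
    have : (c t).1 = t := rfl
    simp only [this] at k1 k2 k3 ⊢
    linarith
  have hcc : Continuous c := by rw [hc]; fun_prop
  have hctb : c tb = (tb, xb, 0) := hΨp
  have hcon : ContinuousOn (fun q : ℝ × ℝ × ℝ => u q.1 q.2 - ε * gfun β b q - v q.1 q.2) K :=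
    ((huc.mono hKE).sub (hgs.continuous.continuousOn.const_smul ε)).sub (hvc.mono hKE)
  have hcon2 : ContinuousOn (fun t => u (c t).1 (c t).2 - ε * gfun β b (c t) - v (c t).1 (c t).2)
      (Set.Icc tb t₁) := hcon.comp hcc.continuousOn hcK
  have hlim := (hcon2 tb ⟨le_rfl, htb1.le⟩).mono_left
    (nhdsWithin_mono tb (Set.Ioo_subset_Icc_self (a := tb) (b := t₁)))
  have hne : (𝓝[Set.Ioo tb t₁] tb).NeBot := by
    rw [← mem_closure_iff_nhdsWithin_neBot, closure_Ioo htb1.ne]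
    exact ⟨le_rfl, htb1.le⟩
  have hrhs : Tendsto (fun t => M - ε * (t₁ - t)) (𝓝[Set.Ioo tb t₁] tb) (𝓝 (M - ε * (t₁ - tb))) :=
    ((by fun_prop : Continuous fun t => M - ε * (t₁ - t)).tendsto tb).mono_left nhdsWithin_le_nhds
  have hle := le_of_tendsto_of_tendsto hlim hrhs
    (by filter_upwards [self_mem_nhdsWithin] with t ht using hfin t ht)
  simp only [hctb] at hle
  have : 0 < ε * (t₁ - tb) := mul_pos hε (by linarith)
  simp only at hM
  linarith

lemma Cal.quad (κ tb : ℝ) :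
    Cal κ (fun p => (p.2 - 1 / 2) ^ 2 + (p.1 - tb)) (fun _ _ => 1 + 2 * κ) := by
  refine ⟨by fun_prop, fun _ _ => 1, fun _ z => 2 * (z - 1 / 2),
    fun _ _ => 2 * 1, ?_, ?_, ?_, ?_⟩
  · intro t z
    exact ((hasDerivAt_id t).sub_const tb).const_add ((z - 1 / 2) ^ 2)
  · intro t z
    have := (((hasDerivAt_id z).sub_const (1 / 2)).pow 2).add_const (t - tb)
    exact this.congr_deriv (by norm_num)
  · intro t z
    exact ((hasDerivAt_id z).sub_const (1 / 2)).const_mul 2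
  · intro t z
    ring

lemma local1 {r μ σ a b ε M : ℝ} (hσ : 0 < σ) {u v : ℝ → ℝ × ℝ → ℝ} {p : ℝ × ℝ × ℝ}
    {N : Set (ℝ × ℝ × ℝ)}
    (hN : N ∈ 𝓝 p) (hv : LSuper r μ σ (domI a b) N (fun q => v q.1 q.2))
    (hu : LSuper r μ σ (domI a b) N (fun q => -u q.1 q.2))
    (huc : ContinuousOn (fun p : ℝ × (ℝ × ℝ) => u p.1 p.2) (Set.Icc a b ×ˢ Sbar))
    (hvc : ContinuousOn (fun p : ℝ × (ℝ × ℝ) => v p.1 p.2) (Set.Icc a b ×ˢ Sbar))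
    (hε : 0 < ε) (hp : p ∈ domI a b) (hx : 0 < p.2.2)
    (hM : M = u p.1 p.2 - ε * gfun (|r| + |μ| + 1) b p - v p.1 p.2)
    (hmax : ∀ q ∈ Set.Icc a b ×ˢ Sbar,
      u q.1 q.2 - ε * gfun (|r| + |μ| + 1) b q - v q.1 q.2 ≤ M) : False := by
  set β := |r| + |μ| + 1 with hβ
  set m := μ - σ ^ 2 / 2 with hm
  obtain ⟨tb, xb, yb⟩ := p
  simp only at hx
  have hp1 : a ≤ tb := hp.1
  have hp2 : tb < b := hp.2.1
  have hxb : 0 ≤ xb := (mem_Sbar.1 hp.2.2.1).1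
  set y₀ := xb * Real.exp (-r * tb) with hy₀
  have hy₀p : 0 ≤ y₀ := mul_nonneg hxb (Real.exp_pos _).le
  set z₀ := Real.log yb - m * tb with hz₀
  set Ψ : ℝ × ℝ × ℝ → ℝ × ℝ × ℝ :=
    fun q => (q.1, q.2.1 * Real.exp (r * q.1), Real.exp (q.2.2 + m * q.1)) with hΨ
  have hΨc : Continuous Ψ := by rw [hΨ]; fun_prop
  have hexp : ∀ t, Real.exp (r * t) * Real.exp (-r * t) = 1 := by
    intro t; rw [← Real.exp_add]; simp
  have hexp' : ∀ t, Real.exp (-r * t) * Real.exp (r * t) = 1 := by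
    intro t; rw [← Real.exp_add]; simp
  have hΨp : Ψ (tb, y₀, z₀) = (tb, xb, yb) := by
    simp only [hΨ, hy₀, hz₀]; rw [mul_assoc, hexp', mul_one, sub_add_cancel, Real.exp_log hx]
  have hN' : ∀ᶠ q in 𝓝 (tb, y₀, z₀), Ψ q ∈ N ∧ (Ψ q).1 < b := by
    have h1 : ∀ᶠ q in 𝓝 (Ψ (tb, y₀, z₀)), q ∈ N ∧ q.1 < b := by
      rw [hΨp]
      refine Filter.Eventually.and hN ?_
      exact continuous_fst.continuousAt.eventually (gt_mem_nhds hp2)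
    exact hΨc.continuousAt.eventually h1
  obtain ⟨ρ, hρ, hball⟩ := Metric.nhds_basis_closedBall.eventually_iff.1 hN'
  set t₁ := tb + ρ with ht₁
  have htb1 : tb < t₁ := by linarith
  set B : Set (ℝ × ℝ × ℝ) := Set.Icc tb t₁ ×ˢ Set.Icc (max 0 (y₀ - ρ)) (y₀ + ρ) ×ˢ
    Set.Icc (z₀ - ρ) (z₀ + ρ) with hB
  have hBall : ∀ q ∈ B, Ψ q ∈ N ∧ (Ψ q).1 < b := by
    rintro ⟨t, y, z⟩ ⟨⟨q1, q2⟩, ⟨q3, q4⟩, q5, q6⟩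
    simp only at q1 q2 q3 q4 q5 q6
    have q3' := (le_max_right 0 (y₀ - ρ)).trans q3
    apply hball
    rw [Metric.mem_closedBall, Prod.dist_eq, Prod.dist_eq, Real.dist_eq, Real.dist_eq, Real.dist_eq]
    refine max_le ?_ (max_le ?_ ?_) <;> rw [abs_le] <;> simp only <;> constructor <;> linarith
  set K := Ψ '' B with hK
  have hKc : IsCompact K :=
    (isCompact_Icc.prod (isCompact_Icc.prod isCompact_Icc)).image hΨc
  have hKpos : ∀ q ∈ K, 0 < q.2.2 := by
    rintro _ ⟨q, hq, rfl⟩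
    exact Real.exp_pos _
  have hKD : K ⊆ domI a b := by
    rintro _ ⟨q, hq, rfl⟩
    obtain ⟨h1, h2⟩ := hBall q hq
    have h4 : 0 < (Ψ q).2.2 := Real.exp_pos _
    refine ⟨hp1.trans hq.1.1, h2, mem_Sbar.2 ⟨?_, h4.le⟩, ?_⟩
    · exact mul_nonneg ((le_max_left _ _).trans hq.2.1.1) (Real.exp_pos _).le
    intro h
    have : (Ψ q).2.2 = 0 := congrArg Prod.snd h
    linarith
  have hKE : K ⊆ Set.Icc a b ×ˢ Sbar := hKD.trans domI_sub
  -- straightened coordinate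
  set L := 2 * ρ with hL
  have hLp : 0 < L := by positivity
  set c₀ := z₀ - ρ with hc₀
  set κ := σ ^ 2 / 2 / L ^ 2 with hκ
  have hκp : 0 < κ := by positivity
  set ζ : ℝ × ℝ × ℝ → ℝ := fun q => (Real.log q.2.2 - (μ - σ ^ 2 / 2) * q.1 - c₀) / L with hζ
  have hζs : ∀ q : ℝ × ℝ × ℝ, 0 < q.2.2 → ContDiffAt ℝ 2 (fun q : ℝ × ℝ × ℝ => (q.1, ζ q)) q := by
    intro q hq
    have : ContDiffAt ℝ 2 (fun q : ℝ × ℝ × ℝ => Real.log q.2.2) q :=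
      ContDiffAt.log (by fun_prop) hq.ne'
    simp only [hζ]
    fun_prop
  have hζc : ContinuousOn (fun q : ℝ × ℝ × ℝ => (q.1, ζ q)) K :=
    fun q hq => (hζs q (hKpos q hq)).continuousAt.continuousWithinAt
  set c : ℝ × ℝ → ℝ × ℝ × ℝ :=
    fun s => (s.1, y₀ * Real.exp (r * s.1), Real.exp (c₀ + L * s.2 + m * s.1)) with hc
  have hcc : Continuous c := by rw [hc]; fun_prop
  have hcK : ∀ s ∈ Set.Icc tb t₁ ×ˢ Set.Icc (0:ℝ) 1, c s ∈ K := by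
    rintro ⟨t, z⟩ ⟨ht, hz⟩
    refine ⟨(t, y₀, c₀ + L * z), ⟨ht, ⟨?_, ?_⟩, ?_, ?_⟩, rfl⟩
    · simp only; exact max_le hy₀p (by linarith)
    · simp only; linarith
    · simp only; nlinarith [hz.1]
    · simp only; nlinarith [hz.2]
  have hζcs : ∀ s, ζ (c s) = s.2 := by
    intro s
    simp only [hζ, hc, Real.log_exp, hm]
    field_simp
    ring
  set O : Set (ℝ × ℝ × ℝ) := {q | tb < q.1 ∧ q.1 < t₁ ∧
    y₀ - ρ < q.2.1 * Real.exp (-r * q.1) ∧ q.2.1 * Real.exp (-r * q.1) < y₀ + ρ ∧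
    Real.exp (c₀ + m * q.1) < q.2.2 ∧ q.2.2 < Real.exp (c₀ + L + m * q.1)} with hO
  have hOo : IsOpen O := by
    refine IsOpen.and ?_ (IsOpen.and ?_ (IsOpen.and ?_ (IsOpen.and ?_ (IsOpen.and ?_ ?_)))) <;>
      exact isOpen_lt (by fun_prop) (by fun_prop)
  have hOpos : ∀ q ∈ O, 0 < q.2.2 := fun q hq => (Real.exp_pos _).trans hq.2.2.2.2.1
  have hOK : ∀ q ∈ O, q ∈ domI a b → q ∈ K := by
    intro q hq hqD
    have hqp := hOpos q hq
    obtain ⟨t, x, z⟩ := q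
    obtain ⟨h1, h2, h3, h4, h5, h6⟩ := hq
    simp only at h1 h2 h3 h4 h5 h6 hqp
    have h5' := (Real.lt_log_iff_exp_lt hqp).2 h5
    have h6' := (Real.log_lt_iff_lt_exp hqp).2 h6
    have hx0 : 0 ≤ x := (mem_Sbar.1 hqD.2.2.1).1
    refine ⟨(t, x * Real.exp (-r * t), Real.log z - m * t), ⟨⟨h1.le, h2.le⟩, ⟨?_, h4.le⟩, ?_, ?_⟩, ?_⟩
    · exact max_le (mul_nonneg hx0 (Real.exp_pos _).le) h3.le
    · simp only; linarith
    · simp only; linarith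
    · simp only [hΨ]; rw [mul_assoc, hexp', mul_one, sub_add_cancel, Real.exp_log hqp]
  have hON : ∀ q ∈ O, q ∈ domI a b → q ∈ N := by
    intro q hq hqD
    obtain ⟨z, hz, rfl⟩ := hOK q hq hqD
    exact (hBall z hz).1
  have hv' : LSuper r μ σ (domI a b) O (fun q => v q.1 q.2) :=
    fun q hqD hqO => hv q hqD (hON q hqO hqD)
  have hu' : LSuper r μ σ (domI a b) O (fun q => -u q.1 q.2) :=
    fun q hqD hqO => hu q hqD (hON q hqO hqD)
  set pq : ℝ × ℝ × ℝ → ℝ := fun q => (q.2.1 * Real.exp (-r * q.1) - y₀) ^ 2 with hpq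
  have hpqs : ContDiff ℝ 2 pq := by rw [hpq]; fun_prop
  have hpqg : ∀ q, HG r μ σ pq q 0 := fun q => peny_hg q
  have hpq0 : ∀ q, 0 ≤ pq q := by
    intro q; simp only [hpq]; positivity
  have hpqc : ∀ t, pq (c t) = 0 := by
    intro t; simp only [hpq, hc]; rw [mul_assoc, hexp]; simp
  -- boundary points
  have hbdry : ∀ q ∈ K, q ∉ O → pq q = 0 → q.1 ≠ tb →
      q = c (q.1, ζ q) ∧ q.1 ∈ Set.Icc tb t₁ ∧ ζ q ∈ Set.Icc (0:ℝ) 1 ∧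
        (q.1 = t₁ ∨ ζ q = 0 ∨ ζ q = 1) := by
    rintro q hqK hqO hq0 hqt
    have e3 : q.2.1 * Real.exp (-r * q.1) = y₀ := by
      have := pow_eq_zero_iff (by norm_num) |>.1 hq0; linarith
    obtain ⟨z, hz, rfl⟩ := hqK
    obtain ⟨t, y, z⟩ := z
    have ht : t ∈ Set.Icc tb t₁ := hz.1
    have hzz : z ∈ Set.Icc (z₀ - ρ) (z₀ + ρ) := hz.2.2
    have hyy : y = y₀ := by
      simp only [hΨ] at e3
      rwa [mul_assoc, hexp, mul_one] at e3
    subst hyy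
    have hζe : ζ (Ψ (t, y₀, z)) = (z - c₀) / L := by
      simp only [hζ, hΨ, Real.log_exp, ← hm]; ring
    have hzL : c₀ + L * ((z - c₀) / L) = z := by field_simp; ring
    rw [hζe]
    refine ⟨?_, ht, ⟨?_, ?_⟩, ?_⟩
    · simp only [hΨ, hc]; rw [hzL]
    · apply div_nonneg _ hLp.le; linarith [hzz.1]
    · rw [div_le_one hLp]; linarith [hzz.2]
    · by_contra hcon
      push Not at hcon
      obtain ⟨k1, k2, k3⟩ := hcon
      have k2' : z ≠ c₀ := fun h => k2 (by rw [h]; simp)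
      have k3' : z ≠ c₀ + L := fun h => k3 (by rw [h]; field_simp; ring)
      apply hqO
      refine ⟨lt_of_le_of_ne ht.1 (Ne.symm hqt), lt_of_le_of_ne ht.2 k1, ?_, ?_, ?_, ?_⟩
      · rw [e3]; linarith
      · rw [e3]; linarith
      · simp only [hΨ]
        apply Real.exp_lt_exp.2
        have := lt_of_le_of_ne hzz.1 (Ne.symm k2')
        linarith
      · simp only [hΨ]
        apply Real.exp_lt_exp.2
        have hle : z ≤ c₀ + L := by linarith [hzz.2]
        have := lt_of_le_of_ne hle k3'
        linarith
  have hgs := gfun_contDiff β b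
  set δ := ε / (1 + 2 * κ) with hδ
  have hδp : 0 < δ := by positivity
  have hδε : δ * (1 + 2 * κ) = ε := by rw [hδ]; field_simp
  set γ := δ * min (1 / 4) ρ with hγ
  have hγp : 0 < γ := mul_pos hδp (lt_min (by norm_num) hρ)
  obtain ⟨H, hH, hH0, hH1, hHt⟩ := dirichlet hκp htb1.le
    (fun s => v (c s).1 (c s).2 - γ / 4)
    (((hvc.mono hKE).comp hcc.continuousOn hcK).sub continuousOn_const)
    (η := γ / 4) (by positivity)
  have hHc : ContDiff ℝ 2 H := hH.1
  have hHb : ∀ q ∈ K, q ∉ O → pq q = 0 → q.1 ≠ tb →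
      H (q.1, ζ q) ≤ v q.1 q.2 ∧ v q.1 q.2 - γ / 2 ≤ H (q.1, ζ q) := by
    intro q h1 h2 h3 h4
    obtain ⟨b1, b2, b3, b4⟩ := hbdry q h1 h2 h3 h4
    have key : |H (q.1, ζ q) - (v (c (q.1, ζ q)).1 (c (q.1, ζ q)).2 - γ / 4)| ≤ γ / 4 := by
      rcases b4 with h | h | h
      · rw [h]; exact hHt _ b3
      · rw [h]; exact hH0 _ b2
      · rw [h]; exact hH1 _ b2
    rw [← b1, abs_le] at key
    constructor <;> linarith [key.1, key.2]
  have hV := MP (t₀ := tb) (Φ := fun q => H (q.1, ζ q)) hv' hOo hKc hOK hKD (hvc.mono hKE)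
    (hHc.continuous.comp_continuousOn hζc) hpqs.continuous.continuousOn
    (fun q hq _ => hHc.contDiffAt.comp q (hζs q (hOpos q hq)))
    (fun q _ _ => hpqs.contDiffAt) (fun q hq _ => ⟨_, by simp, hH.hg hLp hκ (hOpos q hq)⟩)
    (fun q _ _ => hpqg q)
    (fun q _ => hpq0 q) (fun q h1 h2 h3 h4 => (hHb q h1 h2 h3 h4).1)
  -- supersolution dominating u
  have hH2 := hH.add ((Cal.quad κ tb).const_mul δ)
  set H2 : ℝ × ℝ → ℝ := fun p => H p + δ * ((p.2 - 1 / 2) ^ 2 + (p.1 - tb)) with hH2d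
  have hH2c : ContDiff ℝ 2 H2 := hH2.1
  have hU := MP (t₀ := tb) (Φ := fun q => (-1) * (H2 (q.1, ζ q) + (ε * gfun β b q +
      (M - γ / 2)))) hu' hOo hKc hOK hKD (huc.mono hKE).neg
    (by
      have h1 := hgs.continuous.continuousOn (s := K)
      have h2 := hH2c.continuous.comp_continuousOn hζc
      exact continuousOn_const.mul (h2.add ((continuousOn_const.mul h1).add continuousOn_const)))
    hpqs.continuous.continuousOn
    (fun q hq _ => by
      have h1 := hH2c.contDiffAt.comp q (hζs q (hOpos q hq))
      exact contDiffAt_const.mul (h1.add ((contDiffAt_const.mul hgs.contDiffAt).add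
        contDiffAt_const)))
    (fun q _ _ => hpqs.contDiffAt) (fun q hq hqD => by
      obtain ⟨g, hg, hg'⟩ := gfun_ge (r := r) (μ := μ) (σ := σ) (p := q) (b := b)
        (mem_Sbar.1 hqD.2.2.1).1 (mem_Sbar.1 hqD.2.2.1).2 hqD.2.1.le
      refine ⟨_, ?_, ((hH2.hg hLp hκ (hOpos q hq)).add
        ((hg'.const_mul ε).add (HG.const _))).const_mul (-1)⟩
      rw [hδε]
      nlinarith) (fun q _ _ => hpqg q)
    (fun q _ => hpq0 q) (fun q h1 h2 h3 h4 => by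
      have k1 := (hHb q h1 h2 h3 h4).2
      obtain ⟨b1, b2, b3, b4⟩ := hbdry q h1 h2 h3 h4
      have k2 := hmax q (hKE h1)
      have k3 : γ ≤ δ * ((ζ q - 1 / 2) ^ 2 + (q.1 - tb)) := by
        rw [hγ]
        apply mul_le_mul_of_nonneg_left _ hδp.le
        have n1 := b2.1
        rcases b4 with h | h | h
        · refine (min_le_right _ _).trans ?_
          rw [h, ht₁]
          nlinarith [sq_nonneg (ζ q - 1 / 2)]
        · refine (min_le_left _ _).trans ?_
          rw [h]; norm_num; linarith
        · refine (min_le_left _ _).trans ?_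
          rw [h]; norm_num; linarith
      simp only [hH2d]
      linarith)
  have hfin : ∀ t ∈ Set.Ioo tb t₁, u (c (t, 1/2)).1 (c (t, 1/2)).2 - ε * gfun β b (c (t, 1/2))
      - v (c (t, 1/2)).1 (c (t, 1/2)).2 ≤ M - γ / 2 + δ * (t - tb) := by
    intro t ht
    have hm' : c (t, 1/2) ∈ K := hcK _ ⟨⟨ht.1.le, ht.2.le⟩, by norm_num, by norm_num⟩
    have k1 := hV (c (t, 1/2)) hm' (hpqc _) ht.1
    have k2 := hU (c (t, 1/2)) hm' (hpqc _) ht.1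
    have h1 : (c (t, 1/2)).1 = t := rfl
    rw [hζcs, h1] at k1 k2
    simp only [hH2d] at k2
    rw [h1] 
    norm_num at k1 k2 ⊢
    linarith
  have hctb : c (tb, 1/2) = (tb, xb, yb) := by
    rw [← hΨp]
    simp only [hΨ, hc]
    have : c₀ + L * (1 / 2) + m * tb = z₀ + m * tb := by rw [hc₀, hL]; ring
    rw [this]
  have hcon : ContinuousOn (fun q : ℝ × ℝ × ℝ => u q.1 q.2 - ε * gfun β b q - v q.1 q.2) K :=
    ((huc.mono hKE).sub (hgs.continuous.continuousOn.const_smul ε)).sub (hvc.mono hKE)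
  have hcon2 : ContinuousOn (fun t => u (c (t, 1/2)).1 (c (t, 1/2)).2 - ε * gfun β b (c (t, 1/2))
      - v (c (t, 1/2)).1 (c (t, 1/2)).2)
      (Set.Icc tb t₁) := hcon.comp (f := fun t => c (t, 1/2))
        (hcc.comp (by fun_prop)).continuousOn
        (fun t ht => hcK _ ⟨ht, by norm_num, by norm_num⟩)
  have hlim := (hcon2 tb ⟨le_rfl, htb1.le⟩).mono_left
    (nhdsWithin_mono tb (Set.Ioo_subset_Icc_self (a := tb) (b := t₁)))
  have hne : (𝓝[Set.Ioo tb t₁] tb).NeBot := by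
    rw [← mem_closure_iff_nhdsWithin_neBot, closure_Ioo htb1.ne]
    exact ⟨le_rfl, htb1.le⟩
  have hrhs : Tendsto (fun t => M - γ / 2 + δ * (t - tb)) (𝓝[Set.Ioo tb t₁] tb)
      (𝓝 (M - γ / 2 + δ * (tb - tb))) :=
    ((by fun_prop : Continuous fun t => M - γ / 2 + δ * (t - tb)).tendsto tb).mono_left
      nhdsWithin_le_nhds
  have hle := le_of_tendsto_of_tendsto hlim hrhs
    (by filter_upwards [self_mem_nhdsWithin] with t ht using hfin t ht)
  simp only [hctb] at hle
  simp only at hM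
  nlinarith

lemma step {C : ℝ → ℝ} (hC : IsCostFn C) {r μ σ a b W : ℝ} (hσ : 0 < σ)
    {u v : ℝ → ℝ × ℝ → ℝ} {F : ℝ × ℝ → ℝ}
    (huc : ContinuousOn (fun p : ℝ × (ℝ × ℝ) => u p.1 p.2) (Set.Icc a b ×ˢ Sbar))
    (hvc : ContinuousOn (fun p : ℝ × (ℝ × ℝ) => v p.1 p.2) (Set.Icc a b ×ˢ Sbar))
    (hub : BdW a b W u) (hvb : BdW a b W v)
    (hv0 : ∀ t ∈ Set.Icc a b, v t (0, 0) = W)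
    (hu : SubI C r μ σ a b u) (hv : SupI C r μ σ a b v)
    (hut : ∀ x ∈ Sset, (u b x : EReal) ≤
      min (F x : EReal) (uscEnv (MopF C u) (Set.Icc a b ×ˢ Sbar) (b, x)))
    (hvt : ∀ x ∈ Sset,
      min (F x : EReal) (lscEnv (MopF C v) (Set.Icc a b ×ˢ Sbar) (b, x)) ≤ (v b x : EReal)) :
    ∀ t ∈ Set.Icc a b, ∀ x ∈ Sbar, u t x ≤ v t x := by
  intro t₀ ht₀ x₀ hx₀
  by_contra hcon
  rw [not_le] at hcon
  set β := |r| + |μ| + 1 with hβ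
  have hβp : 0 ≤ β := by positivity
  set E : Set (ℝ × (ℝ × ℝ)) := Set.Icc a b ×ˢ Sbar with hE
  have hgs := gfun_contDiff β b
  have hg1 : ∀ q ∈ E, 1 + q.2.1 + q.2.2 ≤ gfun β b q := by
    intro q hq
    have := mem_Sbar.1 hq.2
    have e1 : 1 ≤ Real.exp (β * (b - q.1)) :=
      Real.one_le_exp (mul_nonneg hβp (by linarith [hq.1.2]))
    unfold gfun
    nlinarith [this.1, this.2]
  set p₀ : ℝ × ℝ × ℝ := (t₀, x₀) with hp₀
  have hp₀E : p₀ ∈ E := ⟨ht₀, hx₀⟩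
  have hg0 : 0 < gfun β b p₀ := by
    have := hg1 p₀ hp₀E
    have := mem_Sbar.1 hx₀
    have : 0 ≤ p₀.2.1 := this.1
    have : 0 ≤ p₀.2.2 := (mem_Sbar.1 hx₀).2
    linarith
  set ε := (u t₀ x₀ - v t₀ x₀) / (2 * gfun β b p₀) with hεd
  have hε : 0 < ε := div_pos (by linarith) (by linarith)
  set f : ℝ × ℝ × ℝ → ℝ := fun q => u q.1 q.2 - ε * gfun β b q - v q.1 q.2 with hf
  have hfp₀ : 0 < f p₀ := by
    have : ε * gfun β b p₀ = (u t₀ x₀ - v t₀ x₀) / 2 := by rw [hεd]; field_simp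
    simp only [hf]
    rw [this]
    simp only [hp₀]
    linarith
  have hfc : ContinuousOn f E :=
    (huc.sub (hgs.continuous.continuousOn.const_smul ε)).sub hvc
  have hW : 0 ≤ W := by have := hub _ ht₀ _ hx₀; linarith
  -- maximum point
  set R := W / ε with hR
  have hbig : ∀ q ∈ E, 0 < f q → q.2.1 ≤ R ∧ q.2.2 ≤ R := by
    intro q hq hpos
    have h1 := hg1 q hq
    have h2 := hub _ hq.1 _ hq.2
    have h3 := hvb _ hq.1 _ hq.2
    have h4 := mem_Sbar.1 hq.2
    simp only [hf] at hpos
    rw [hR, le_div_iff₀ hε, le_div_iff₀ hε]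
    constructor <;> nlinarith [h4.1, h4.2, mul_nonneg hε.le h4.1, mul_nonneg hε.le h4.2]
  set A : Set (ℝ × ℝ × ℝ) := Set.Icc a b ×ˢ Set.Icc 0 R ×ˢ Set.Icc 0 R with hA
  have hAE : A ⊆ E := by
    rintro q ⟨h1, h2, h3⟩
    exact ⟨h1, mem_Sbar.2 ⟨h2.1, h3.1⟩⟩
  have hAc : IsCompact A := isCompact_Icc.prod (isCompact_Icc.prod isCompact_Icc)
  have hmemA : ∀ q ∈ E, 0 < f q → q ∈ A := by
    intro q hq hpos
    obtain ⟨h1, h2⟩ := hbig q hq hpos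
    have h4 := mem_Sbar.1 hq.2
    exact ⟨hq.1, ⟨h4.1, h1⟩, h4.2, h2⟩
  obtain ⟨p, hpA, hpmax⟩ := hAc.exists_isMaxOn ⟨p₀, hmemA p₀ hp₀E hfp₀⟩ (hfc.mono hAE)
  have hpE := hAE hpA
  have hfp : 0 < f p := lt_of_lt_of_le hfp₀ (hpmax (hmemA p₀ hp₀E hfp₀))
  have hmax : ∀ q ∈ E, f q ≤ f p := by
    intro q hq
    by_cases h : 0 < f q
    · exact hpmax (hmemA q hq h)
    · linarith
  have hgp : 0 < gfun β b p := by
    have := hg1 p hpE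
    have := mem_Sbar.1 hpE.2
    linarith
  have hpS : p.2 ∈ Sset := by
    refine ⟨hpE.2, ?_⟩
    intro h
    have h' : p.2 = (0, 0) := h
    have h1 := (hub _ hpE.1 _ hpE.2).2
    have h2 := hv0 _ hpE.1
    have : 0 < u p.1 p.2 - ε * gfun β b p - v p.1 p.2 := hfp
    rw [h', h2] at this
    rw [h'] at h1
    nlinarith
  by_cases htb : p.1 = b
  · -- terminal time
    obtain ⟨t, x⟩ := p
    simp only at htb
    subst htb
    have h1 := hut x hpS
    have h2 := hvt x hpS
    have hnj := no_jump hC (β := β) hε hub hv0 huc hpE hfp hmax (h1.trans (min_le_right _ _))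
    have h3 := (no_jump_nhd hC hvc hpE hnj).self_of_nhds hpE
    have h4 : (F x : EReal) ≤ v t x := by
      rcases min_le_iff.1 h2 with h | h
      · exact h
      · exact absurd h (not_le.2 h3)
    have h5 : u t x ≤ v t x := by exact_mod_cast (h1.trans (min_le_left _ _)).trans h4
    simp only [hf] at hfp
    nlinarith
  · have hpD : p ∈ domI a b := ⟨hpE.1.1, lt_of_le_of_ne hpE.1.2 htb, hpS⟩
    have hnj := no_jump hC (β := β) hε hub hv0 huc hpE hfp hmax (sub_obs hu hub huc hpD)
    have hN := no_jump_nhd hC hvc hpE hnj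
    have hvL := sup_LSuper hv hvb {q | q ∈ E → (v q.1 q.2 : EReal) < lscEnv (MopF C v) E q}
      (fun q hqD hq => hq (domI_sub hqD))
    have huL := sub_LSuper hu hub {q | q ∈ E → (v q.1 q.2 : EReal) < lscEnv (MopF C v) E q}
    rcases (mem_Sbar.1 hpE.2).2.lt_or_eq with h | h
    · exact local1 hσ hN hvL huL huc hvc hε hpD h rfl hmax
    · exact local0 hN hvL huL huc hvc hε hpD h.symm rfl hmax

/-- (Uniqueness part of Theorem 3.1: two continuous, suitably bounded viscosity
solutions of the QVI system coincide on the whole domain.) -/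
theorem qvi_uniqueness
    (C : ℝ → ℝ) (hC : IsCostFn C)
    (r μ σ : ℝ) (hσ : 0 < σ)
    (K : ℕ) (hK : 1 ≤ K)
    (T : ℕ → ℝ) (hT0 : T 0 = 0) (hT : ∀ k, k < K → T k < T (k + 1))
    (w G : ℕ → ℝ)
    (hw : ∀ k, 1 ≤ k → k ≤ K → 0 < w k) (hG : ∀ k, 1 ≤ k → k ≤ K → 0 < G k)
    (u v : ℕ → ℝ → ℝ × ℝ → ℝ)
    (hu_cont : ∀ k, 1 ≤ k → k ≤ K →
      ContinuousOn (fun p : ℝ × (ℝ × ℝ) => u k p.1 p.2)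
        (Set.Icc (T (k - 1)) (T k) ×ˢ Sbar))
    (hv_cont : ∀ k, 1 ≤ k → k ≤ K →
      ContinuousOn (fun p : ℝ × (ℝ × ℝ) => v k p.1 p.2)
        (Set.Icc (T (k - 1)) (T k) ×ˢ Sbar))
    (hu_bd : ∀ k, 1 ≤ k → k ≤ K → ∀ t ∈ Set.Icc (T (k - 1)) (T k), ∀ x ∈ Sbar,
      0 ≤ u k t x ∧ u k t x ≤ ∑ i ∈ Finset.Icc k K, w i * G i)
    (hv_bd : ∀ k, 1 ≤ k → k ≤ K → ∀ t ∈ Set.Icc (T (k - 1)) (T k), ∀ x ∈ Sbar,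
      0 ≤ v k t x ∧ v k t x ≤ ∑ i ∈ Finset.Icc k K, w i * G i)
    (hu_sol : IsQVISol C r μ σ K T w G u)
    (hv_sol : IsQVISol C r μ σ K T w G v) :
    ∀ k, 1 ≤ k → k ≤ K → ∀ t ∈ Set.Icc (T (k - 1)) (T k), ∀ x ∈ Sbar,
      u k t x = v k t x := by
  obtain ⟨hu1, hu2, hu3, hu4⟩ := hu_sol
  obtain ⟨hv1, hv2, hv3, hv4⟩ := hv_sol
  have huS : ∀ k, 1 ≤ k → k ≤ K → SubI C r μ σ (T (k - 1)) (T k) (u k) :=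
    fun k h1 h2 tb xb ht hx φ hφ h => (hu1 k h1 h2 tb xb ht hx φ hφ).1 h
  have hvS : ∀ k, 1 ≤ k → k ≤ K → SubI C r μ σ (T (k - 1)) (T k) (v k) :=
    fun k h1 h2 tb xb ht hx φ hφ h => (hv1 k h1 h2 tb xb ht hx φ hφ).1 h
  have huP : ∀ k, 1 ≤ k → k ≤ K → SupI C r μ σ (T (k - 1)) (T k) (u k) :=
    fun k h1 h2 tb xb ht hx φ hφ h => (hu1 k h1 h2 tb xb ht hx φ hφ).2 h
  have hvP : ∀ k, 1 ≤ k → k ≤ K → SupI C r μ σ (T (k - 1)) (T k) (v k) :=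
    fun k h1 h2 tb xb ht hx φ hφ h => (hv1 k h1 h2 tb xb ht hx φ hφ).2 h
  have main : ∀ n, ∀ k, 1 ≤ k → k ≤ K → K - k = n →
      ∀ t ∈ Set.Icc (T (k - 1)) (T k), ∀ x ∈ Sbar, u k t x = v k t x := by
    intro n
    induction n with
    | zero =>
      intro k h1 h2 h3 t ht x hx
      have hkK : k = K := by omega
      subst hkK
      apply le_antisymm
      · exact step hC hσ (hu_cont k h1 h2) (hv_cont k h1 h2) (hu_bd k h1 h2) (hv_bd k h1 h2)
          (hv4 k h1 h2) (huS k h1 h2) (hvP k h1 h2) (fun x hx => (hu3 x hx).1)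
          (fun x hx => (hv3 x hx).2) t ht x hx
      · exact step hC hσ (hv_cont k h1 h2) (hu_cont k h1 h2) (hv_bd k h1 h2) (hu_bd k h1 h2)
          (hu4 k h1 h2) (hvS k h1 h2) (huP k h1 h2) (fun x hx => (hv3 x hx).1)
          (fun x hx => (hu3 x hx).2) t ht x hx
    | succ n ih =>
      intro k h1 h2 h3 t ht x hx
      have hlt : k < K := by omega
      have ihk := ih (k + 1) (by omega) (by omega) (by omega)
      have hF : ∀ x ∈ Sset, {y | ∃ θ : ℝ, 0 ≤ θ ∧ θ ≤ x.1 ∧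
            y = w k * max (G k - θ) 0 + u (k + 1) (T k) (x.1 - θ, x.2)} =
          {y | ∃ θ : ℝ, 0 ≤ θ ∧ θ ≤ x.1 ∧
            y = w k * max (G k - θ) 0 + v (k + 1) (T k) (x.1 - θ, x.2)} := by
        intro x hx
        have hxs := mem_Sbar.1 hx.1
        have he : ∀ θ : ℝ, θ ≤ x.1 →
            u (k + 1) (T k) (x.1 - θ, x.2) = v (k + 1) (T k) (x.1 - θ, x.2) := by
          intro θ hθ
          apply ihk (T k) ⟨by simp, (hT k hlt).le⟩
          exact mem_Sbar.2 ⟨by simpa using hθ, hxs.2⟩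
        ext y
        constructor
        · rintro ⟨θ, a1, a2, a3⟩
          exact ⟨θ, a1, a2, by rw [a3, he θ a2]⟩
        · rintro ⟨θ, a1, a2, a3⟩
          exact ⟨θ, a1, a2, by rw [a3, he θ a2]⟩
      apply le_antisymm
      · exact step hC hσ (hu_cont k h1 h2) (hv_cont k h1 h2) (hu_bd k h1 h2) (hv_bd k h1 h2)
          (hv4 k h1 h2) (huS k h1 h2) (hvP k h1 h2)
          (F := fun x => sInf {y | ∃ θ : ℝ, 0 ≤ θ ∧ θ ≤ x.1 ∧
            y = w k * max (G k - θ) 0 + v (k + 1) (T k) (x.1 - θ, x.2)})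
          (fun x hx => by rw [← hF x hx]; exact (hu2 k h1 hlt x hx).1)
          (fun x hx => (hv2 k h1 hlt x hx).2) t ht x hx
      · exact step hC hσ (hv_cont k h1 h2) (hu_cont k h1 h2) (hv_bd k h1 h2) (hu_bd k h1 h2)
          (hu4 k h1 h2) (hvS k h1 h2) (huP k h1 h2)
          (F := fun x => sInf {y | ∃ θ : ℝ, 0 ≤ θ ∧ θ ≤ x.1 ∧
            y = w k * max (G k - θ) 0 + v (k + 1) (T k) (x.1 - θ, x.2)})
          (fun x hx => (hv2 k h1 hlt x hx).1)
          (fun x hx => by rw [← hF x hx]; exact (hu2 k h1 hlt x hx).2) t ht x hx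
  intro k h1 h2
  exact main (K - k) k h1 h2 rfl
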